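/- Let A be a piecewise-Koszul algebra with period p ≥ 2 and jump degree d ≥ p, and let M be a piecewise-Koszul A-module generated in degree 0. Then for every integer k ≥ 1: (1) 𝓔_k(M) = ⊕_{n≥0} Ext^{pkn}_A(M,A_0), graded with n-th component Ext^{pkn}_A(M,A_0), is a Koszul module over 𝓔_k(A); and (2) 𝓔_k(A) = ⊕_{n≥0} Ext^{pkn}_A(A_0,A_0), graded with n-th component Ext^{pkn}_A(A_0,A_0) and the Yoneda product, is a Koszul algebra. -/

import Mathlib

noncomputable section

/-- The jump function `δ^d_p(n) = ((n − (n mod p))/p)·d + (n mod p)`. -/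
def jump (d p n : ℕ) : ℕ := (n - n % p) / p * d + n % p

/-- A positively graded `F`-algebra `A = ⊕_{i≥0} A_i`. -/
structure GradedAlg (F : Type) [Field F] where
  A : Type
  [ringA : Ring A]
  [algA : Algebra F A]
  grading : ℕ → Submodule F A
  [graded : GradedAlgebra grading]

attribute [instance] GradedAlg.ringA GradedAlg.algA GradedAlg.graded

namespace GradedAlg

variable {F : Type} [Field F] (𝒜 : GradedAlg F)

/-- The graded Jacobson radical `J = ⊕_{i≥1} A_i`, i.e. the irrelevant ideal. -/
def jideal : Ideal 𝒜.A := (HomogeneousIdeal.irrelevant 𝒜.grading).toIdeal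

/-- The standing assumptions: `A_0` is a semisimple Artin algebra, `A` is generated in
degrees 0 and 1 (`A_i · A_j = A_{i+j}`), and `A_1` is finite dimensional over `F`. -/
structure Standing : Prop where
  semisimple : IsSemisimpleRing ↥(𝒜.grading 0)
  artinian : IsArtinianRing ↥(𝒜.grading 0)
  gen01 : ∀ i j : ℕ, 𝒜.grading i * 𝒜.grading j = 𝒜.grading (i + j)
  findim : FiniteDimensional F ↥(𝒜.grading 1)

/-- A (ℤ-)graded module over the graded algebra `𝒜`. -/
structure GMod where
  M : Type
  [acg : AddCommGroup M]
  [modF : Module F M]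
  [modA : Module 𝒜.A M]
  [tower : IsScalarTower F 𝒜.A M]
  [scomm : SMulCommClass 𝒜.A F M]
  grading : ℤ → Submodule F M
  sup_eq_top : (⨆ j : ℤ, grading j) = ⊤
  indep : iSupIndep grading
  smul_mem : ∀ {i : ℕ} {j : ℤ} {a : 𝒜.A} {m : M},
    a ∈ 𝒜.grading i → m ∈ grading j → a • m ∈ grading ((i : ℤ) + j)

attribute [instance] GMod.acg GMod.modF GMod.modA GMod.tower GMod.scomm

variable {𝒜}

/-- A degree-zero morphism of graded modules. -/
structure GHom (M N : 𝒜.GMod) where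
  lin : M.M →ₗ[𝒜.A] N.M
  grad : ∀ (j : ℤ) (x : M.M), x ∈ M.grading j → lin x ∈ N.grading j

/-- A graded module is generated in degree `s` if `A · M_s = M`. -/
def GMod.GenInDeg (M : 𝒜.GMod) (s : ℤ) : Prop :=
  Submodule.span 𝒜.A (M.grading s : Set M.M) = ⊤

/-- `T` is the trivial graded module `A_0 = A/J`, concentrated in degree `0`. -/
def IsTrivialGMod (T : 𝒜.GMod) : Prop :=
  (∀ j : ℤ, j ≠ 0 → T.grading j = ⊥) ∧
    Nonempty (T.M ≃ₗ[𝒜.A] (𝒜.A ⧸ 𝒜.jideal))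

/-- A minimal graded projective resolution
`⋯ → P_{n+1} → P_n → ⋯ → P_0 → M → 0` of the graded module `M`,
with finitely generated terms. -/
structure MinRes (M : 𝒜.GMod) where
  P : ℕ → 𝒜.GMod
  d : ∀ n : ℕ, GHom (P (n + 1)) (P n)
  aug : GHom (P 0) M
  fg : ∀ n, Module.Finite 𝒜.A (P n).M
  projective : ∀ n, Module.Projective 𝒜.A (P n).M
  aug_surj : Function.Surjective aug.lin
  exact_aug : LinearMap.range (d 0).lin = LinearMap.ker aug.lin
  exact : ∀ n, LinearMap.range (d (n + 1)).lin = LinearMap.ker (d n).lin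
  minimal : ∀ n, LinearMap.range (d n).lin ≤ 𝒜.jideal • (⊤ : Submodule 𝒜.A (P n).M)

variable (𝒜)

/-- `M` is a piecewise-Koszul module (period `p`, jump degree `d`, shift `s`):
it has a minimal graded projective resolution with `P_n` generated in degree `δ^d_p(n) + s`. -/
def IsPKMod (p d : ℕ) (s : ℤ) (M : 𝒜.GMod) : Prop :=
  ∃ R : MinRes M, ∀ n : ℕ, (R.P n).GenInDeg ((jump d p n : ℤ) + s)

/-- `A` is a piecewise-Koszul algebra (period `p`, jump degree `d`): the trivial module `T`
admits a minimal graded projective resolution with `P_n` generated in degree `δ^d_p(n)`. -/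
def IsPKAlg (p d : ℕ) (T : 𝒜.GMod) : Prop := IsPKMod 𝒜 p d 0 T

/-- A Koszul module: a minimal graded projective resolution with `P_n` generated in degree `n`. -/
def IsKoszulMod (M : 𝒜.GMod) : Prop :=
  ∃ R : MinRes M, ∀ n : ℕ, (R.P n).GenInDeg (n : ℤ)

variable {𝒜}

section Ext

variable (T : 𝒜.GMod) {M : 𝒜.GMod}

/-- The space of `A`-linear maps `P_n → T` (cochains). -/
abbrev HomSp (R : MinRes M) (n : ℕ) := (R.P n).M →ₗ[𝒜.A] T.M

/-- Precomposition, as an `F`-linear map on cochains. -/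
def precompF {M₁ M₂ : 𝒜.GMod} (g : M₁.M →ₗ[𝒜.A] M₂.M) :
    (M₂.M →ₗ[𝒜.A] T.M) →ₗ[F] (M₁.M →ₗ[𝒜.A] T.M) where
  toFun f := f ∘ₗ g
  map_add' f₁ f₂ := by ext x; simp
  map_smul' c f := by ext x; simp

/-- Cocycles: maps `P_n → T` vanishing on the image of `P_{n+1}`. -/
def cocyc (R : MinRes M) (n : ℕ) : Submodule F (HomSp T R n) :=
  LinearMap.ker (precompF T (R.d n).lin)

/-- Coboundaries: maps `P_n → T` factoring through `d_{n-1}`. -/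
def cobound (R : MinRes M) : (n : ℕ) → Submodule F (HomSp T R n)
  | 0 => ⊥
  | n + 1 => LinearMap.range (precompF T (R.d n).lin)

/-- The coboundaries, viewed inside the cocycles. -/
def extRel (R : MinRes M) (n : ℕ) : Submodule F ↥(cocyc T R n) :=
  (cobound T R n).comap (cocyc T R n).subtype

/-- `Ext^n_A(M, T)`, computed from the resolution `R` of `M`. -/
abbrev ExtQ (R : MinRes M) (n : ℕ) := ↥(cocyc T R n) ⧸ extRel T R n

/-- The class in `Ext^n_A(M,T)` of a cocycle. -/
def extCls {R : MinRes M} {n : ℕ} {f : HomSp T R n} (hf : f ∈ cocyc T R n) :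
    ExtQ T R n :=
  Submodule.Quotient.mk ⟨f, hf⟩

/-- Cochains of shift-degree `j`: maps `P_n → T` vanishing on every `(P_n)_i` with `i ≠ j`. -/
def homDeg (R : MinRes M) (n : ℕ) (j : ℤ) : Submodule F (HomSp T R n) where
  carrier := {f | ∀ i : ℤ, i ≠ j → ∀ x ∈ (R.P n).grading i, f x = 0}
  add_mem' := fun hf hg i hi x hx => by
    simp only [LinearMap.add_apply, hf i hi x hx, hg i hi x hx, add_zero]
  zero_mem' := fun i hi x hx => rfl
  smul_mem' := fun c f hf i hi x hx => by
    simp only [LinearMap.smul_apply, hf i hi x hx, smul_zero]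

/-- The shift-degree `j` component `Ext^n_A(M,T)_j`. -/
def extComp (R : MinRes M) (n : ℕ) (j : ℤ) : Submodule F (ExtQ T R n) :=
  Submodule.map (extRel T R n).mkQ ((homDeg T R n j).comap (cocyc T R n).subtype)

/-- Transport `Ext` along an equality of cohomological degrees. -/
def extCast (R : MinRes M) {a b : ℕ} (h : a = b) : ExtQ T R a ≃ₗ[F] ExtQ T R b :=
  h ▸ LinearEquiv.refl F (ExtQ T R a)

/-- A chain map lifting of a cochain `g : P_j → T` over the resolutions `RM` of `M`
and `RT` of `T`. -/
structure ChainLift (RT : MinRes T) (RM : MinRes M) (j : ℕ)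
    (g : (RM.P j).M →ₗ[𝒜.A] T.M) where
  ℓ : ∀ m k : ℕ, m = k + j → ((RM.P m).M →ₗ[𝒜.A] (RT.P k).M)
  comm_aug : RT.aug.lin ∘ₗ ℓ j 0 (by omega) = g
  comm : ∀ k : ℕ, (RT.d k).lin ∘ₗ ℓ (k + j + 1) (k + 1) (by omega) =
    ℓ (k + j) k rfl ∘ₗ (RM.d (k + j)).lin

/-- `μ` is the (bigraded family of) Yoneda product(s)
`Ext^i(T,T) ⊗ Ext^j(M,T) → Ext^{i+j}(M,T)`: it is computed by composing a cocycle
`f : P_i → T` with a chain lifting of a cocycle `g : Q_j → T`. -/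
def IsYonedaMul (RT : MinRes T) (RM : MinRes M)
    (μ : ∀ i j : ℕ, ExtQ T RT i →ₗ[F] ExtQ T RM j →ₗ[F] ExtQ T RM (i + j)) : Prop :=
  ∀ (i j : ℕ) (f : HomSp T RT i) (hf : f ∈ cocyc T RT i)
    (g : HomSp T RM j) (hg : g ∈ cocyc T RM j)
    (L : ChainLift T RT RM j g)
    (hc : f ∘ₗ L.ℓ (i + j) i (by omega) ∈ cocyc T RM (i + j)),
    μ i j (extCls T hf) (extCls T hg) = extCls T hc

/-- `E(A) = Ext^*_A(A_0,A_0)` is generated in the ext-degrees belonging to `S`. -/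
def ExtGenIn (RT : MinRes T)
    (μ : ∀ i j : ℕ, ExtQ T RT i →ₗ[F] ExtQ T RT j →ₗ[F] ExtQ T RT (i + j))
    (S : Set ℕ) : Prop :=
  ∀ W : (n : ℕ) → Submodule F (ExtQ T RT n),
    (∀ n ∈ S, W n = ⊤) →
    (∀ (i j : ℕ) (x : ExtQ T RT i) (y : ExtQ T RT j),
      x ∈ W i → y ∈ W j → μ i j x y ∈ W (i + j)) →
    ∀ n, W n = ⊤

/-- `E(M) = Ext^*_A(M,A_0)` is generated in degree `0` as a graded `E(A)`-module. -/
def ExtModGenInZero (RT : MinRes T) (RM : MinRes M)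
    (μ : ∀ i j : ℕ, ExtQ T RT i →ₗ[F] ExtQ T RM j →ₗ[F] ExtQ T RM (i + j)) : Prop :=
  ∀ W : (n : ℕ) → Submodule F (ExtQ T RM n),
    W 0 = ⊤ →
    (∀ (i j : ℕ) (x : ExtQ T RT i) (y : ExtQ T RM j),
      y ∈ W j → μ i j x y ∈ W (i + j)) →
    ∀ n, W n = ⊤

end Ext

/-- `JM` is (a graded module isomorphic to) the submodule `J·M` of `M`. -/
def IsJM (M JM : 𝒜.GMod) : Prop :=
  ∃ e : JM.M ≃ₗ[𝒜.A] ↥(𝒜.jideal • (⊤ : Submodule 𝒜.A M.M)),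
    ∀ (j : ℤ) (x : JM.M), x ∈ JM.grading j ↔ ((e x : M.M) ∈ M.grading j)

/-- `Q` is (a graded module isomorphic to) the quotient `M/JM`. -/
def IsQuotJM (M Q : 𝒜.GMod) : Prop :=
  ∃ e : Q.M ≃ₗ[𝒜.A] (M.M ⧸ (𝒜.jideal • (⊤ : Submodule 𝒜.A M.M))),
    ∀ j : ℤ, Q.grading j = Submodule.map
      ((e.symm.toLinearMap ∘ₗ (𝒜.jideal • (⊤ : Submodule 𝒜.A M.M)).mkQ).restrictScalars F)
      (M.grading j)

/-- `W` is (isomorphic to) the `n`-th syzygy `Ω^n(M)` of `M` in the minimal graded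
projective resolution `R`. -/
def IsSyzygy {M : 𝒜.GMod} (R : MinRes M) : ℕ → 𝒜.GMod → Prop
  | 0, W => ∃ e : W.M ≃ₗ[𝒜.A] M.M,
      ∀ (j : ℤ) (x : W.M), x ∈ W.grading j ↔ e x ∈ M.grading j
  | 1, W => ∃ e : W.M ≃ₗ[𝒜.A] ↥(LinearMap.ker R.aug.lin),
      ∀ (j : ℤ) (x : W.M), x ∈ W.grading j ↔ ((e x : (R.P 0).M) ∈ (R.P 0).grading j)
  | (n + 2), W => ∃ e : W.M ≃ₗ[𝒜.A] ↥(LinearMap.ker (R.d n).lin),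
      ∀ (j : ℤ) (x : W.M), x ∈ W.grading j ↔ ((e x : (R.P (n + 1)).M) ∈ (R.P (n + 1)).grading j)

end GradedAlg

namespace GradedAlg

section CxTheory

variable {F : Type} [Field F] {𝒜 : GradedAlg F}

/-- The degree zero subring. -/
abbrev R0 (𝒜 : GradedAlg F) : Type := ↥(𝒜.grading 0)

/-- The inclusion of the degree zero subring. -/
def incl0 (𝒜 : GradedAlg F) : R0 𝒜 →+* 𝒜.A := (SetLike.GradeZero.subring 𝒜.grading).subtype

instance modR0 (𝒜 : GradedAlg F) (Z : Type) [AddCommGroup Z] [Module 𝒜.A Z] :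
    Module (R0 𝒜) Z := Module.compHom Z (incl0 𝒜)

theorem r0_smul {Z : Type} [AddCommGroup Z] [Module 𝒜.A Z] (a : R0 𝒜) (z : Z) :
    a • z = (a : 𝒜.A) • z := rfl

instance towerR0 (Z : Type) [AddCommGroup Z] [Module 𝒜.A Z] : IsScalarTower (R0 𝒜) 𝒜.A Z :=
  ⟨fun a b z => mul_smul (a : 𝒜.A) b z⟩

/-- `A_{j-s} · V`. -/
def Gd {Y : Type} [AddCommGroup Y] [Module 𝒜.A Y] (V : Submodule (R0 𝒜) Y) (s j : ℕ) :
    Submodule (R0 𝒜) Y :=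
  Submodule.span (R0 𝒜) {x | ∃ i, s + i = j ∧ ∃ a ∈ 𝒜.grading i, ∃ v ∈ V, a • v = x}

section Gd
variable {Y Z : Type} [AddCommGroup Y] [Module 𝒜.A Y] [AddCommGroup Z] [Module 𝒜.A Z]
  {V : Submodule (R0 𝒜) Y} {W : Submodule (R0 𝒜) Z}

theorem mem_Gd {s i j : ℕ} (h : s + i = j) {a : 𝒜.A} (ha : a ∈ 𝒜.grading i) {v : Y} (hv : v ∈ V) :
    a • v ∈ Gd V s j := Submodule.subset_span ⟨i, h, a, ha, v, hv, rfl⟩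

theorem Gd_lt {s j : ℕ} (h : j < s) {x : Y} (hx : x ∈ Gd V s j) : x = 0 := by
  have : {x : Y | ∃ i, s + i = j ∧ ∃ a ∈ 𝒜.grading i, ∃ v ∈ V, a • v = x} = ∅ := by
    refine Set.eq_empty_iff_forall_notMem.2 fun y => ?_
    rintro ⟨i, hi, -⟩; omega
  rw [Gd, this, Submodule.span_empty] at hx
  simpa using hx

theorem Gd_self {s : ℕ} : Gd V s s = V := by
  apply le_antisymm
  · refine Submodule.span_le.2 ?_
    rintro x ⟨i, hi, a, ha, v, hv, rfl⟩
    obtain rfl : i = 0 := by omega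
    exact V.smul_mem (⟨a, ha⟩ : R0 𝒜) hv
  · intro v hv
    have := mem_Gd (V := V) (s := s) (j := s) (i := 0) rfl (SetLike.GradedOne.one_mem) hv
    simpa using this

theorem Gd_smul {s j i : ℕ} {a : 𝒜.A} (ha : a ∈ 𝒜.grading i) {x : Y} (hx : x ∈ Gd V s j) :
    a • x ∈ Gd V s (i + j) := by
  induction hx using Submodule.span_induction generalizing a with
  | mem x hx =>
    obtain ⟨l, hl, b, hb, v, hv, rfl⟩ := hx
    rw [← mul_smul]
    exact mem_Gd (by omega) (SetLike.mul_mem_graded ha hb) hv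
  | zero => simp
  | add x y _ _ hx hy => rw [smul_add]; exact add_mem (hx ha) (hy ha)
  | smul r x _ hx =>
    rw [r0_smul, ← mul_smul]
    have : a * (r : 𝒜.A) ∈ 𝒜.grading (i + 0) := SetLike.mul_mem_graded ha r.2
    rw [add_zero] at this
    exact hx this

theorem Gd_map {s s' e i : ℕ} (f : Y →ₗ[𝒜.A] Z) (hf : ∀ v ∈ V, f v ∈ Gd W s' e) {x : Y}
    (hx : x ∈ Gd V s (s + i)) : f x ∈ Gd W s' (e + i) := by
  induction hx using Submodule.span_induction with
  | mem x hx =>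
    obtain ⟨l, hl, b, hb, v, hv, rfl⟩ := hx
    obtain rfl : l = i := by omega
    rw [map_smul, add_comm]
    exact Gd_smul hb (hf v hv)
  | zero => simp
  | add x y _ _ hx hy => rw [map_add]; exact add_mem hx hy
  | smul r x _ hx =>
    rw [r0_smul, map_smul]
    exact Submodule.smul_mem _ r hx

theorem Gd_map' {s s' i : ℕ} (f : Y →ₗ[𝒜.A] Z) (hf : ∀ v ∈ V, f v ∈ W) {x : Y}
    (hx : x ∈ Gd V s (s + i)) : f x ∈ Gd W s' (s' + i) :=
  Gd_map f (fun v hv => by rw [Gd_self]; exact hf v hv) hx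

theorem Gd_eqOn {s j : ℕ} (f g : Y →ₗ[𝒜.A] Z) (h : ∀ v ∈ V, f v = g v) {x : Y}
    (hx : x ∈ Gd V s j) : f x = g x := by
  induction hx using Submodule.span_induction with
  | mem x hx =>
    obtain ⟨l, hl, b, hb, v, hv, rfl⟩ := hx
    rw [map_smul, map_smul, h v hv]
  | zero => simp
  | add x y _ _ hx hy => rw [map_add, map_add, hx, hy]
  | smul r x _ hx => rw [r0_smul, map_smul, map_smul, hx]

theorem Gd_kill {s j : ℕ} (f : Y →ₗ[𝒜.A] Z) (h : ∀ v ∈ V, f v = 0) {x : Y}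
    (hx : x ∈ Gd V s j) : f x = 0 :=
  Gd_eqOn f 0 h hx

/-- lift an element of the image -/
theorem Gd_lift {s j : ℕ} (f : Y →ₗ[𝒜.A] Z) (h : ∀ w ∈ W, ∃ v ∈ V, f v = w) {z : Z}
    (hz : z ∈ Gd W s j) : ∃ y ∈ Gd V s j, f y = z := by
  induction hz using Submodule.span_induction with
  | mem x hx =>
    obtain ⟨l, hl, b, hb, w, hw, rfl⟩ := hx
    obtain ⟨v, hv, rfl⟩ := h w hw
    exact ⟨b • v, mem_Gd hl hb hv, by simp⟩
  | zero => exact ⟨0, zero_mem _, by simp⟩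
  | add x y _ _ hx hy =>
    obtain ⟨x', h1, rfl⟩ := hx
    obtain ⟨y', h2, rfl⟩ := hy
    exact ⟨x' + y', add_mem h1 h2, by simp⟩
  | smul r x _ hx =>
    obtain ⟨x', h1, rfl⟩ := hx
    exact ⟨r • x', Submodule.smul_mem _ r h1, by simp [r0_smul]⟩

end Gd

/-- Total complex of projectives, the `n`-th one generated by `V n` in degree `δ n`. -/
structure Cx (𝒜 : GradedAlg F) (δ : ℕ → ℕ) where
  Y : Type
  [acg : AddCommGroup Y]
  [mod : Module 𝒜.A Y]
  V : ℕ → Submodule (R0 𝒜) Y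
  fg : ∀ n, (V n).FG
  span : Submodule.span 𝒜.A (⋃ n, (V n : Set Y)) = ⊤
  free : ∀ (Z : Type) [AddCommGroup Z] [Module 𝒜.A Z] (u : ∀ n, V n →ₗ[R0 𝒜] Z),
    ∃ f : Y →ₗ[𝒜.A] Z, ∀ n (v : V n), f v = u n v
  d : Y →ₗ[𝒜.A] Y
  d0 : ∀ v ∈ V 0, d v = 0
  dV : ∀ n, ∀ v ∈ V (n + 1), d v ∈ Gd (V n) (δ n) (δ (n + 1))
  dd : ∀ x, d (d x) = 0

attribute [instance] Cx.acg Cx.mod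

namespace Cx
variable {δ : ℕ → ℕ}

/-- Bihomogeneous component. -/
def G (Y : Cx 𝒜 δ) (n j : ℕ) : Submodule (R0 𝒜) Y.Y := Gd (Y.V n) (δ n) j

theorem ext_on (Y : Cx 𝒜 δ) {Z : Type} [AddCommGroup Z] [Module 𝒜.A Z] {f g : Y.Y →ₗ[𝒜.A] Z}
    (h : ∀ n, ∀ v ∈ Y.V n, f v = g v) : f = g := by
  refine LinearMap.ext_on Y.span ?_
  intro v hv
  obtain ⟨n, hn⟩ := Set.mem_iUnion.1 hv
  exact h n v hn

theorem free_single (Y : Cx 𝒜 δ) {Z : Type} [AddCommGroup Z] [Module 𝒜.A Z] (n : ℕ)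
    (u : Y.V n →ₗ[R0 𝒜] Z) : ∃ f : Y.Y →ₗ[𝒜.A] Z, (∀ v : Y.V n, f v = u v) ∧
      ∀ m, m ≠ n → ∀ v ∈ Y.V m, f v = 0 := by
  obtain ⟨f, hf⟩ := Y.free Z (Function.update (fun _ => 0) n u)
  refine ⟨f, fun v => by rw [hf, Function.update_self], fun m hm v hv => ?_⟩
  rw [hf m ⟨v, hv⟩, Function.update_of_ne hm]; rfl

/-- Exactness from position `s` on. -/
def Ex (Y : Cx 𝒜 δ) (s : ℕ) : Prop := ∀ n, s ≤ n → ∀ j, (n = 0 → δ 0 < j) →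
  ∀ x ∈ Y.G n j, Y.d x = 0 → ∃ y ∈ Y.G (n + 1) j, Y.d y = x

theorem d_inj (hδ : StrictMono δ) {Y : Cx 𝒜 δ} {s n : ℕ} (h : Y.Ex s) (hn : s ≤ n) (hn0 : n ≠ 0)
    {v : Y.Y} (hv : v ∈ Y.V n) (hd : Y.d v = 0) : v = 0 := by
  obtain ⟨y, hy, rfl⟩ := h n hn (δ n) (fun h => absurd h hn0) v (by rw [G, Gd_self]; exact hv) hd
  rw [Gd_lt (hδ (Nat.lt_succ_self n)) hy, map_zero]

/-- Chain maps of homological degree `-c t`. -/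
structure IsChain (c t : ℕ) (Y X : Cx 𝒜 δ) (f : Y.Y →ₗ[𝒜.A] X.Y) : Prop where
  lt : ∀ n, n < c * t → ∀ v ∈ Y.V n, f v = 0
  mem : ∀ n, ∀ v ∈ Y.V (n + c * t), f v ∈ X.V n
  comm : ∀ y, f (Y.d y) = X.d (f y)

/-- Periodicity assumptions on the jump function. -/
structure Per (δ : ℕ → ℕ) (c D : ℕ) : Prop where
  mono : StrictMono δ
  zero : δ 0 = 0
  per : ∀ n, δ (n + c) = δ n + D
  pos : 0 < c

theorem Per.per_t {c D : ℕ} (h : Per δ c D) (t n : ℕ) : δ (n + c * t) = δ n + D * t := by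
  induction t with
  | zero => simp
  | succ t ih => rw [Nat.mul_succ, ← add_assoc, h.per, ih]; ring

theorem chain_unique {c D : ℕ} (hP : Per δ c D) {Y X : Cx 𝒜 δ} (hX : X.Ex 0) {t : ℕ} {f : Y.Y →ₗ[𝒜.A] X.Y}
    (hf : IsChain c t Y X f) (h0 : ∀ v ∈ Y.V (c * t), f v = 0) : f = 0 := by
  have key : ∀ n, ∀ v ∈ Y.V (n + c * t), f v = 0 := by
    intro n
    induction n with
    | zero => simpa using h0
    | succ n ih =>
      intro v hv
      have hv' : v ∈ Y.V (n + c * t + 1) := by convert hv using 2; ring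
      refine d_inj hP.mono hX (Nat.zero_le _) (Nat.succ_ne_zero n) (hf.mem _ v hv) ?_
      rw [← hf.comm]
      exact Gd_kill f ih (Y.dV _ v hv')
  refine Y.ext_on fun m v hv => ?_
  rcases lt_or_ge m (c * t) with h | h
  · simpa using hf.lt m h v hv
  · obtain ⟨n, rfl⟩ := Nat.exists_eq_add_of_le h
    rw [add_comm] at hv
    simpa using key n v hv

theorem chain_exists {c D : ℕ} (hP : Per δ c D) {Y X : Cx 𝒜 δ} (hX : X.Ex 0) (t : ℕ) (u : Y.V (c * t) →ₗ[R0 𝒜] X.Y)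
    (hu : ∀ v, u v ∈ X.V 0) : ∃ f, IsChain c t Y X f ∧ ∀ v : Y.V (c * t), f v = u v := by
  let Good : ℕ → (Y.Y →ₗ[𝒜.A] X.Y) → Prop := fun n f =>
    (∀ m, m ≠ n + c * t → ∀ v ∈ Y.V m, f v = 0) ∧ (∀ v ∈ Y.V (n + c * t), f v ∈ X.V n) ∧
      ∀ v ∈ Y.V (n + c * t + 1), X.d (f (Y.d v)) = 0
  obtain ⟨f0, hf0, hf0'⟩ := Y.free_single (c * t) u
  have good0 : Good 0 f0 := by
    have h1 : ∀ v ∈ Y.V (c * t), f0 v ∈ X.V 0 := fun v hv => by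
      rw [hf0 ⟨v, hv⟩]; exact hu _
    refine ⟨by simpa using hf0', by simpa using h1, ?_⟩
    intro v hv
    have := Y.dV _ v hv
    rw [zero_add] at this
    exact Gd_kill (X.d ∘ₗ f0) (fun w hw => X.d0 _ (h1 w hw)) this
  have step : ∀ n f, Good n f → ∃ f', Good (n + 1) f' ∧
      ∀ v ∈ Y.V (n + c * t + 1), X.d (f' v) = f (Y.d v) := by
    rintro n f ⟨h1, h2, h3⟩
    have hpre : ∀ v : Y.V (n + c * t + 1), ∃ w ∈ X.V (n + 1), X.d w = f (Y.d v) := by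
      rintro ⟨v, hv⟩
      have hd := Y.dV _ v hv
      have e1 : δ (n + c * t + 1) = δ (n + c * t) + (δ (n + 1) - δ n) := by
        have a1 := hP.per_t t n
        have a2 := hP.per_t t (n + 1)
        have a3 := hP.mono (Nat.lt_succ_self n)
        rw [show n + c * t + 1 = n + 1 + c * t by ring]
        simp only [Nat.succ_eq_add_one] at a3
        omega
      have e2 : δ n + (δ (n + 1) - δ n) = δ (n + 1) := by
        have a3 := hP.mono (Nat.lt_succ_self n)
        simp only [Nat.succ_eq_add_one] at a3
        omega
      rw [e1] at hd
      have hm := Gd_map' (s' := δ n) f h2 hd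
      rw [e2] at hm
      obtain ⟨w, hw, hw'⟩ := hX n (Nat.zero_le _) (δ (n + 1))
        (fun hn => by subst hn; exact hP.mono (Nat.lt_succ_self 0)) _ hm (h3 v hv)
      rw [G, Gd_self] at hw
      exact ⟨w, hw, hw'⟩
    choose w hw hw' using hpre
    have inj : ∀ a b, a ∈ X.V (n + 1) → b ∈ X.V (n + 1) → X.d a = X.d b → a = b := by
      intro a b ha hb hab
      rw [← sub_eq_zero]
      exact d_inj hP.mono hX (Nat.zero_le _) (Nat.succ_ne_zero n) (sub_mem ha hb)
        (by rw [map_sub, hab, sub_self])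
    let ul : Y.V (n + c * t + 1) →ₗ[R0 𝒜] X.Y :=
      { toFun := w
        map_add' := fun a b => inj _ _ (hw _) (add_mem (hw a) (hw b)) (by
          rw [map_add, hw', hw', hw', Submodule.coe_add, map_add, map_add])
        map_smul' := fun r a => inj _ _ (hw _) (Submodule.smul_mem _ r (hw a)) (by
          simp only [hw', RingHom.id_apply, r0_smul, map_smul, Submodule.coe_smul]) }
    obtain ⟨f', hf', hf''⟩ := Y.free_single _ ul
    have e : n + 1 + c * t = n + c * t + 1 := by ring
    have hd : ∀ v ∈ Y.V (n + c * t + 1), X.d (f' v) = f (Y.d v) := fun v hv => by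
      rw [hf' ⟨v, hv⟩]; exact hw' _
    refine ⟨f', ⟨fun m hm v hv => hf'' m (by omega) v hv, fun v hv => ?_, fun v hv => ?_⟩, hd⟩
    · rw [e] at hv
      rw [hf' ⟨v, hv⟩]; exact hw _
    · have := Y.dV _ v hv
      rw [e] at this
      have := Gd_eqOn (X.d ∘ₗ f') (f ∘ₗ Y.d) hd this
      simp only [LinearMap.comp_apply] at this
      rw [this, Y.dd, map_zero]
  choose nx hnx1 hnx2 using step
  let S : (n : ℕ) → {f // Good n f} := fun n =>
    Nat.rec ⟨f0, good0⟩ (fun n f => ⟨nx n f.1 f.2, hnx1 n f.1 f.2⟩) n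
  have hS : ∀ n, ∀ v ∈ Y.V (n + c * t + 1), X.d ((S (n + 1)).1 v) = (S n).1 (Y.d v) :=
    fun n => hnx2 n (S n).1 (S n).2
  obtain ⟨f, hf⟩ := Y.free X.Y (fun m => if c * t ≤ m then
    ((S (m - c * t)).1.restrictScalars (R0 𝒜)) ∘ₗ (Y.V m).subtype else 0)
  have hf1 : ∀ m, m < c * t → ∀ v ∈ Y.V m, f v = 0 := fun m hm v hv => by
    rw [hf m ⟨v, hv⟩, if_neg (by omega)]; rfl
  have hf2 : ∀ n, ∀ v ∈ Y.V (n + c * t), f v = (S n).1 v := fun n v hv => by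
    rw [hf _ ⟨v, hv⟩, if_pos (by omega)]
    have : (S (n + c * t - c * t)).1 = (S n).1 := by rw [Nat.add_sub_cancel]
    exact LinearMap.congr_fun this v
  refine ⟨f, ⟨hf1, fun n v hv => ?_, ?_⟩, fun v => ?_⟩
  · rw [hf2 n v hv]; exact (S n).2.2.1 v hv
  · suffices f ∘ₗ Y.d = X.d ∘ₗ f from fun y => LinearMap.congr_fun this y
    refine Y.ext_on fun m v hv => ?_
    simp only [LinearMap.comp_apply]
    have small : m ≤ c * t → f (Y.d v) = 0 := fun hm => by
      rcases m with _ | m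
      · rw [Y.d0 v hv, map_zero]
      · exact Gd_kill f (hf1 m (by omega)) (Y.dV m v hv)
    rcases lt_trichotomy m (c * t) with h | h | h
    · rw [small h.le, hf1 m h v hv, map_zero]
    · rw [small h.le]
      have hv0 : v ∈ Y.V (0 + c * t) := by rw [zero_add, ← h]; exact hv
      rw [hf2 0 v hv0]
      exact (X.d0 _ ((S 0).2.2.1 v hv0)).symm
    · obtain ⟨n, rfl⟩ : ∃ n, m = n + c * t + 1 := ⟨m - c * t - 1, by omega⟩
      have e : n + c * t + 1 = n + 1 + c * t := by ring
      rw [hf2 (n + 1) v (e ▸ hv), hS n v hv]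
      exact Gd_eqOn f (S n).1 (hf2 n) (Y.dV _ v hv)
  · have hv0 : (v : Y.Y) ∈ Y.V (0 + c * t) := by rw [zero_add]; exact v.2
    rw [hf2 0 v hv0]
    exact hf0 v

end Cx
end CxTheory
end GradedAlg


namespace GradedAlg

section CxConstructions

variable {F : Type} [Field F] {𝒜 : GradedAlg F}

theorem Gd_map'' {Y Z : Type} [AddCommGroup Y] [Module 𝒜.A Y] [AddCommGroup Z] [Module 𝒜.A Z]
    {V : Submodule (R0 𝒜) Y} {W : Submodule (R0 𝒜) Z} {s j : ℕ} (f : Y →ₗ[𝒜.A] Z)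
    (hf : ∀ v ∈ V, f v ∈ W) {x : Y} (hx : x ∈ Gd V s j) : f x ∈ Gd W s j := by
  rcases lt_or_ge j s with h | h
  · rw [Gd_lt h hx, map_zero]; exact zero_mem _
  · obtain ⟨i, rfl⟩ := Nat.exists_eq_add_of_le h
    exact Gd_map' f hf hx

namespace Cx
variable {δ : ℕ → ℕ} {c : ℕ}

theorem d_mem {Y : Cx 𝒜 δ} (hδ : StrictMono δ) {n j : ℕ} {x : Y.Y} (hx : x ∈ Y.G (n + 1) j) :
    Y.d x ∈ Y.G n j := by
  rcases lt_or_ge j (δ (n + 1)) with h | h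
  · rw [Gd_lt h hx, map_zero]; exact zero_mem _
  · obtain ⟨i, rfl⟩ := Nat.exists_eq_add_of_le h
    exact Gd_map Y.d (Y.dV n) hx

theorem IsChain.comp {Y X W : Cx 𝒜 δ} {m n : ℕ} {g : X.Y →ₗ[𝒜.A] W.Y} {f : Y.Y →ₗ[𝒜.A] X.Y}
    (hg : IsChain c m X W g) (hf : IsChain c n Y X f) : IsChain c (m + n) Y W (g ∘ₗ f) where
  lt l hl v hv := by
    rw [LinearMap.comp_apply]
    rcases lt_or_ge l (c * n) with h | h
    · rw [hf.lt l h v hv, map_zero]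
    · obtain ⟨q, rfl⟩ := Nat.exists_eq_add_of_le h
      rw [add_comm] at hv
      refine hg.lt q ?_ _ (hf.mem q v hv)
      rw [mul_add] at hl; omega
  mem l v hv := by
    rw [mul_add, ← add_assoc] at hv
    exact hg.mem l _ (hf.mem _ v hv)
  comm y := by simp only [LinearMap.comp_apply, hf.comm, hg.comm]

theorem IsChain.add {Y X : Cx 𝒜 δ} {n : ℕ} {g f : Y.Y →ₗ[𝒜.A] X.Y}
    (hg : IsChain c n Y X g) (hf : IsChain c n Y X f) : IsChain c n Y X (g + f) where
  lt l hl v hv := by rw [LinearMap.add_apply, hg.lt l hl v hv, hf.lt l hl v hv, add_zero]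
  mem l v hv := add_mem (hg.mem l v hv) (hf.mem l v hv)
  comm y := by simp only [LinearMap.add_apply, hf.comm, hg.comm, map_add]

theorem IsChain.sub {Y X : Cx 𝒜 δ} {n : ℕ} {g f : Y.Y →ₗ[𝒜.A] X.Y}
    (hg : IsChain c n Y X g) (hf : IsChain c n Y X f) : IsChain c n Y X (g - f) where
  lt l hl v hv := by rw [LinearMap.sub_apply, hg.lt l hl v hv, hf.lt l hl v hv, sub_zero]
  mem l v hv := sub_mem (hg.mem l v hv) (hf.mem l v hv)
  comm y := by simp only [LinearMap.sub_apply, hf.comm, hg.comm, map_sub]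

theorem IsChain.zero {Y X : Cx 𝒜 δ} {n : ℕ} : IsChain c n Y X 0 where
  lt l hl v hv := rfl
  mem l v hv := zero_mem _
  comm y := by simp

theorem IsChain.id {Y : Cx 𝒜 δ} : IsChain c 0 Y Y LinearMap.id where
  lt l hl v hv := by simp at hl
  mem l v hv := hv
  comm y := rfl

theorem chain_ext {D : ℕ} (hP : Per δ c D) {Y X : Cx 𝒜 δ} (hX : X.Ex 0) {t : ℕ}
    {f g : Y.Y →ₗ[𝒜.A] X.Y} (hf : IsChain c t Y X f) (hg : IsChain c t Y X g)
    (h0 : ∀ v ∈ Y.V (c * t), f v = g v) : f = g := by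
  rw [← sub_eq_zero]
  exact chain_unique hP hX (hf.sub hg) fun v hv => by
    rw [LinearMap.sub_apply, h0 v hv, sub_self]

theorem IsChain.G_mem {D : ℕ} (hP : Per δ c D) {Y X : Cx 𝒜 δ} {t : ℕ} {f : Y.Y →ₗ[𝒜.A] X.Y}
    (hf : IsChain c t Y X f) {n j : ℕ} {y : Y.Y} (hy : y ∈ Y.G (n + c * t) (j + D * t)) :
    f y ∈ X.G n j := by
  rcases lt_or_ge j (δ n) with h | h
  · rw [Gd_lt _ hy, map_zero]
    · exact zero_mem _
    · rw [hP.per_t]; omega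
  · obtain ⟨i, rfl⟩ := Nat.exists_eq_add_of_le h
    refine Gd_map' (s := δ (n + c * t)) f (hf.mem n) ?_
    rw [hP.per_t]
    rw [G, hP.per_t] at hy
    rw [show δ n + D * t + i = δ n + i + D * t by ring]; exact hy

theorem retr (hss : IsSemisimpleRing (R0 𝒜)) {Y P : Cx 𝒜 δ} {t : ℕ} {f : Y.Y →ₗ[𝒜.A] P.Y}
    (hf : IsChain c t Y P f) (n : ℕ) (hinj : ∀ v ∈ Y.V (n + c * t), f v = 0 → v = 0) :
    ∃ h : P.V n →ₗ[R0 𝒜] Y.V (n + c * t), ∀ v (hv : v ∈ Y.V (n + c * t)),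
      h ⟨f v, hf.mem n v hv⟩ = ⟨v, hv⟩ := by
  let g : Y.V (n + c * t) →ₗ[R0 𝒜] P.V n :=
    (f.restrictScalars (R0 𝒜)).restrict (hf.mem n)
  have hg : Function.Injective g := by
    rw [injective_iff_map_eq_zero]
    rintro ⟨v, hv⟩ h
    have := congrArg Subtype.val h
    exact Subtype.ext (hinj v hv this)
  have := hss
  obtain ⟨h, hh⟩ := IsSemisimpleModule.extension_property (R := R0 𝒜) (M := P.V n) (N := Y.V (n + c * t)) (P := Y.V (n + c * t)) g hg LinearMap.id
  exact ⟨h, fun v hv => LinearMap.congr_fun hh ⟨v, hv⟩⟩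

theorem split {D : ℕ} (hP : Per δ c D) (hss : IsSemisimpleRing (R0 𝒜)) {Y P : Cx 𝒜 δ} {t : ℕ}
    (hY : Y.Ex (c * t + 1)) {f : Y.Y →ₗ[𝒜.A] P.Y} (hf : IsChain c t Y P f)
    (hinj : ∀ v ∈ Y.V (c * t), f v = 0 → v = 0) :
    ∃ r : P.Y →ₗ[𝒜.A] Y.Y, (∀ n, ∀ v ∈ P.V n, r v ∈ Y.V (n + c * t)) ∧
      ∀ n, ∀ v ∈ Y.V (n + c * t), r (f v) = v := by
  have inj : ∀ n, ∀ v ∈ Y.V (n + c * t), f v = 0 → v = 0 := by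
    intro n
    induction n with
    | zero => simpa using hinj
    | succ n ih =>
      intro v hv h
      obtain ⟨h1, hh1⟩ := retr hss hf n ih
      obtain ⟨r, hr, -⟩ := P.free_single n ((Y.V (n + c * t)).subtype ∘ₗ h1)
      have hv' : v ∈ Y.V (n + c * t + 1) := by convert hv using 2; ring
      have e : Y.d v = r (f (Y.d v)) := by
        refine Gd_eqOn LinearMap.id (r ∘ₗ f) (fun w hw => ?_) (Y.dV _ v hv')
        have := hr ⟨f w, hf.mem n w hw⟩
        exact (this.trans (congrArg Subtype.val (hh1 w hw))).symm
      rw [hf.comm, h, map_zero, map_zero] at e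
      exact d_inj hP.mono hY (by omega) (by omega) hv e
  choose h hh using fun n => retr hss hf n (inj n)
  obtain ⟨r, hr⟩ := P.free Y.Y (fun n => (Y.V (n + c * t)).subtype ∘ₗ h n)
  refine ⟨r, fun n v hv => ?_, fun n v hv => ?_⟩
  · rw [hr n ⟨v, hv⟩]; exact (h n _).2
  · rw [hr n ⟨f v, hf.mem n v hv⟩]
    exact congrArg Subtype.val (hh n v hv)

/-- Finite powers. -/
def pi (X : Cx 𝒜 δ) (m : ℕ) : Cx 𝒜 δ where
  Y := Fin m → X.Y
  V n :=
    { carrier := {x | ∀ k, x k ∈ X.V n}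
      add_mem' := fun hx hy k => add_mem (hx k) (hy k)
      zero_mem' := fun k => zero_mem _
      smul_mem' := fun r x hx k => (X.V n).smul_mem r (hx k) }
  fg n := by
    have := Submodule.fg_pi (R := R0 𝒜) (ι := Fin m) (M := fun _ => X.Y)
      (p := fun _ => X.V n) (fun _ => X.fg n)
    obtain ⟨S, hS⟩ := this
    refine ⟨S, ?_⟩
    apply SetLike.coe_injective
    have h2 := congrArg (fun q : Submodule (R0 𝒜) (Fin m → X.Y) => (q : Set (Fin m → X.Y))) hS
    refine Eq.trans ?_ (h2.trans ?_)
    · rfl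
    · ext x; simp [Submodule.mem_pi]
  span := by
    rw [eq_top_iff]
    intro x _
    rw [← Finset.univ_sum_single (M := fun _ : Fin m => X.Y) x]
    refine Submodule.sum_mem _ fun k _ => ?_
    have : x k ∈ Submodule.span 𝒜.A (⋃ n, (X.V n : Set X.Y)) := by rw [X.span]; trivial
    have h2 := Submodule.mem_map_of_mem (f := LinearMap.single 𝒜.A (fun _ : Fin m => X.Y) k) this
    rw [Submodule.map_span] at h2
    refine Submodule.span_mono ?_ h2
    rintro _ ⟨v, hv, rfl⟩
    obtain ⟨n, hn⟩ := Set.mem_iUnion.1 hv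
    refine Set.mem_iUnion.2 ⟨n, fun l => ?_⟩
    by_cases h : l = k
    · subst h; simpa using hn
    · simp [h]
  free Z _ _ u := by
    have hs : ∀ n (k : Fin m) (v : X.V n), ∀ l, (Pi.single k (v : X.Y) : Fin m → X.Y) l ∈ X.V n := by
      intro n k v l
      by_cases h : l = k
      · subst h; simp
      · simp [h]
    choose f hf using fun k : Fin m => X.free Z (fun n =>
      { toFun := fun v => u n ⟨Pi.single k (v : X.Y), hs n k v⟩
        map_add' := fun a b => by
          rw [← map_add]; congr 1; ext1; simp [Pi.single_add]
        map_smul' := fun r a => by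
          rw [← map_smul]; congr 1; ext1
          exact Pi.single_smul (f := fun _ : Fin m => X.Y) k (r : 𝒜.A) (a : X.Y) })
    refine ⟨∑ k, f k ∘ₗ LinearMap.proj k, fun n v => ?_⟩
    have e : v = ∑ k, ⟨Pi.single k ((v : Fin m → X.Y) k), hs n k ⟨_, v.2 k⟩⟩ := by
      ext1
      rw [AddSubmonoidClass.coe_finsetSum]
      exact (Finset.univ_sum_single (M := fun _ : Fin m => X.Y) _).symm
    conv_rhs => rw [e, map_sum]
    rw [LinearMap.sum_apply]
    exact Finset.sum_congr rfl fun k _ => hf k n ⟨_, v.2 k⟩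
  d := X.d.compLeft (Fin m)
  d0 v hv := by ext k; exact X.d0 _ (hv k)
  dV n v hv := by
    rw [← Finset.univ_sum_single (M := fun _ : Fin m => X.Y) (X.d.compLeft (Fin m) v)]
    refine Submodule.sum_mem _ fun k _ => ?_
    refine Gd_map'' (LinearMap.single 𝒜.A (fun _ : Fin m => X.Y) k) ?_ (X.dV n _ (hv k))
    intro w hw l
    by_cases h : l = k
    · subst h; simpa using hw
    · simp [h]
  dd x := by ext k; exact X.dd _

theorem pi_single (X : Cx 𝒜 δ) (m : ℕ) (k : Fin m) :
    IsChain c 0 X (X.pi m) (LinearMap.single 𝒜.A (fun _ : Fin m => X.Y) k) where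
  lt l hl v hv := by simp at hl
  mem n v hv l := by
    show (Pi.single k v : Fin m → X.Y) l ∈ X.V n
    by_cases h : l = k
    · subst h; simpa using hv
    · simp [h]
  comm y := by
    funext l
    show (Pi.single k (X.d y) : Fin m → X.Y) l = X.d ((Pi.single k y : Fin m → X.Y) l)
    by_cases h : l = k
    · subst h; simp
    · simp [h]

theorem pi_proj (X : Cx 𝒜 δ) (m : ℕ) (k : Fin m) :
    IsChain c 0 (X.pi m) X (LinearMap.proj k) where
  lt l hl v hv := by simp at hl
  mem n v hv := hv k
  comm y := rfl

theorem pi_ex (X : Cx 𝒜 δ) (m : ℕ) (hX : X.Ex 0) : (X.pi m).Ex 0 := by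
  intro n _ j hj x hx hd
  choose y hy hy' using fun k => hX n (Nat.zero_le _) j hj (x k)
    (Gd_map'' (LinearMap.proj k : (Fin m → X.Y) →ₗ[𝒜.A] X.Y) ((pi_proj (c := 0) X m k).mem n) hx)
    (congrFun hd k)
  refine ⟨y, ?_, funext hy'⟩
  rw [← Finset.univ_sum_single (M := fun _ : Fin m => X.Y) y]
  refine Submodule.sum_mem _ fun k _ => ?_
  exact Gd_map'' (LinearMap.single 𝒜.A (fun _ : Fin m => X.Y) k)
    ((pi_single (c := 0) X m k).mem (n + 1)) (hy k)

theorem span_map {Y Z : Type} [AddCommGroup Y] [Module 𝒜.A Y] [AddCommGroup Z] [Module 𝒜.A Z]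
    (s : Y →ₗ[𝒜.A] Z) (hs : Function.Surjective s) (V : ℕ → Submodule (R0 𝒜) Y)
    (h : Submodule.span 𝒜.A (⋃ n, (V n : Set Y)) = ⊤) :
    Submodule.span 𝒜.A (⋃ n, ((V n).map (s.restrictScalars (R0 𝒜)) : Set Z)) = ⊤ := by
  have := congrArg (Submodule.map s) h
  rw [Submodule.map_span, Submodule.map_top, LinearMap.range_eq_top.2 hs, Set.image_iUnion] at this
  exact this

/-- Retracts. -/
def retract (Z : Cx 𝒜 δ) (P : Type) [AddCommGroup P] [Module 𝒜.A P] (i : P →ₗ[𝒜.A] Z.Y)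
    (s : Z.Y →ₗ[𝒜.A] P) (hsi : ∀ x, s (i x) = x) (he : IsChain 0 0 Z Z (i ∘ₗ s)) : Cx 𝒜 δ where
  Y := P
  V n := (Z.V n).map (s.restrictScalars (R0 𝒜))
  fg n := (Z.fg n).map _
  span := span_map s (fun x => ⟨i x, hsi x⟩) Z.V Z.span
  free W _ _ u := by
    obtain ⟨f, hf⟩ := Z.free W (fun n => u n ∘ₗ
      (s.restrictScalars (R0 𝒜)).restrict (fun v hv => Submodule.mem_map_of_mem hv))
    refine ⟨f ∘ₗ i, ?_⟩
    rintro n ⟨_, v, hv, rfl⟩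
    have := hf n ⟨i (s v), he.mem n v hv⟩
    simp only [LinearMap.comp_apply] at this ⊢
    refine this.trans (congrArg (u n) (Subtype.ext ?_))
    exact hsi (s v)
  d := s ∘ₗ Z.d ∘ₗ i
  d0 := by
    rintro _ ⟨v, hv, rfl⟩
    have := Z.d0 _ (he.mem 0 v hv)
    simp only [LinearMap.comp_apply] at this ⊢
    exact (congrArg s this).trans (map_zero s)
  dV := by
    rintro n _ ⟨v, hv, rfl⟩
    exact Gd_map'' s (fun w hw => Submodule.mem_map_of_mem (f := s.restrictScalars (R0 𝒜)) hw)
      (Z.dV n _ (he.mem (n + 1) v hv))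
  dd x := by
    have h1 : i (s (Z.d (i x))) = Z.d (i (s (i x))) := he.comm (i x)
    show s (Z.d (i (s (Z.d (i x))))) = 0
    rw [h1, Z.dd, map_zero]

end Cx
end CxConstructions
end GradedAlg


namespace GradedAlg

section CxCover

variable {F : Type} [Field F] {𝒜 : GradedAlg F}

namespace Cx
variable {δ : ℕ → ℕ} {c : ℕ}

theorem IsChain.congr0 {Y X : Cx 𝒜 δ} {f : Y.Y →ₗ[𝒜.A] X.Y} (c' : ℕ) (h : IsChain c 0 Y X f) :
    IsChain c' 0 Y X f where
  lt l hl := by simp at hl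
  mem n v hv := h.mem n v hv
  comm := h.comm

section Retract
variable (Z : Cx 𝒜 δ) (P : Type) [AddCommGroup P] [Module 𝒜.A P] (i : P →ₗ[𝒜.A] Z.Y)
    (s : Z.Y →ₗ[𝒜.A] P) (hsi : ∀ x, s (i x) = x) (he : IsChain 0 0 Z Z (i ∘ₗ s))

theorem retract_i : IsChain c 0 (retract Z P i s hsi he) Z i where
  lt l hl := by simp at hl
  mem n := by
    rintro _ ⟨v, hv, rfl⟩
    exact he.mem n v hv
  comm y := by
    show i (s (Z.d (i y))) = Z.d (i y)
    have h : i (s (Z.d (i y))) = Z.d (i (s (i y))) := he.comm (i y)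
    exact h.trans (congrArg (fun w => Z.d (i w)) (hsi y))

theorem retract_s : IsChain c 0 Z (retract Z P i s hsi he) s where
  lt l hl := by simp at hl
  mem n v hv := Submodule.mem_map_of_mem (f := s.restrictScalars (R0 𝒜)) hv
  comm y := by
    show s (Z.d y) = s (Z.d (i (s y)))
    have h : i (s (Z.d y)) = Z.d (i (s y)) := he.comm y
    rw [← h, hsi]

theorem retract_ex (hZ : Z.Ex 0) : (retract Z P i s hsi he).Ex 0 := by
  intro n hn j hj x hx hd
  have hi := retract_i (c := 0) Z P i s hsi he
  have hs := retract_s (c := 0) Z P i s hsi he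
  obtain ⟨y, hy, hy'⟩ := hZ n hn j hj (i x) (Gd_map'' i (hi.mem n) hx)
    ((hi.comm x).symm.trans ((congrArg i hd).trans (map_zero i)))
  exact ⟨s y, Gd_map'' s (hs.mem (n + 1)) hy, (hs.comm y).symm.trans ((congrArg s hy').trans (hsi x))⟩

end Retract

section Quo
variable {Y P : Cx 𝒜 δ} {t : ℕ} {f : Y.Y →ₗ[𝒜.A] P.Y} (hf : IsChain c t Y P f)

/-- The quotient complex `P / f(Y)`. -/
def quo (hf : IsChain c t Y P f) : Cx 𝒜 δ where
  Y := P.Y ⧸ LinearMap.range f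
  V n := (P.V n).map ((LinearMap.range f).mkQ.restrictScalars (R0 𝒜))
  fg n := (P.fg n).map _
  span := span_map _ (Submodule.mkQ_surjective _) P.V P.span
  free W _ _ u := by
    obtain ⟨g, hg⟩ := P.free W (fun n => u n ∘ₗ
      ((LinearMap.range f).mkQ.restrictScalars (R0 𝒜)).restrict
        (fun v hv => Submodule.mem_map_of_mem hv))
    have hgf : g ∘ₗ f = 0 := by
      refine Y.ext_on fun n v hv => ?_
      rcases lt_or_ge n (c * t) with h | h
      · simp [hf.lt n h v hv]
      · obtain ⟨m, rfl⟩ := Nat.exists_eq_add_of_le h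
        rw [add_comm] at hv
        have h1 := hg m ⟨f v, hf.mem m v hv⟩
        refine h1.trans ?_
        rw [LinearMap.comp_apply]
        refine (congrArg (u m) (Subtype.ext ?_)).trans (map_zero (u m))
        show (LinearMap.range f).mkQ (f v) = 0
        simp
    refine ⟨(LinearMap.range f).liftQ g ?_, ?_⟩
    · rintro _ ⟨y, rfl⟩
      exact LinearMap.congr_fun hgf y
    · rintro n ⟨_, v, hv, rfl⟩
      exact hg n ⟨v, hv⟩
  d := (LinearMap.range f).mapQ (LinearMap.range f) P.d (by
    rintro _ ⟨y, rfl⟩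
    exact ⟨Y.d y, hf.comm y⟩)
  d0 := by
    rintro _ ⟨v, hv, rfl⟩
    show (LinearMap.range f).mkQ (P.d v) = 0
    rw [P.d0 v hv, map_zero]
  dV := by
    rintro n _ ⟨v, hv, rfl⟩
    show (LinearMap.range f).mkQ (P.d v) ∈ _
    exact Gd_map'' _ (fun w hw => Submodule.mem_map_of_mem
      (f := (LinearMap.range f).mkQ.restrictScalars (R0 𝒜)) hw) (P.dV n v hv)
  dd x := by
    obtain ⟨x, rfl⟩ := Submodule.mkQ_surjective _ x
    show (LinearMap.range f).mkQ (P.d (P.d x)) = 0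
    rw [P.dd, map_zero]

/-- The projection to the quotient complex. -/
def quoMk (hf : IsChain c t Y P f) : P.Y →ₗ[𝒜.A] (quo hf).Y := (LinearMap.range f).mkQ

theorem quoMk_chain (c' : ℕ) : IsChain c' 0 P (quo hf) (quoMk hf) where
  lt l hl := by simp at hl
  mem n v hv := Submodule.mem_map_of_mem (f := (LinearMap.range f).mkQ.restrictScalars (R0 𝒜)) hv
  comm y := rfl

theorem quoMk_eq_zero {x : P.Y} : quoMk hf x = 0 ↔ ∃ y, f y = x := by
  refine (Submodule.Quotient.mk_eq_zero _).trans ?_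
  exact LinearMap.mem_range

theorem quoMk_surj : Function.Surjective (quoMk hf) := Submodule.mkQ_surjective _

theorem quo_ex {D : ℕ} (hP : Per δ c D) (hss : IsSemisimpleRing (R0 𝒜))
    (hY : Y.Ex (c * t + 1)) (hPx : P.Ex 0)
    (hinj : ∀ v ∈ Y.V (c * t), f v = 0 → v = 0) : (quo hf).Ex (c + 1) := by
  obtain ⟨r, hr, hrf⟩ := split hP hss hY hf hinj
  have hfrf : ∀ y, f (r (f y)) = f y := by
    suffices f ∘ₗ r ∘ₗ f = f from fun y => LinearMap.congr_fun this y
    refine Y.ext_on fun n v hv => ?_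
    simp only [LinearMap.comp_apply]
    rcases lt_or_ge n (c * t) with h | h
    · rw [hf.lt n h v hv, map_zero, map_zero]
    · obtain ⟨m, rfl⟩ := Nat.exists_eq_add_of_le h
      rw [add_comm] at hv
      rw [hrf m v hv]
  have hrG : ∀ n j x, x ∈ P.G n j → r x ∈ Y.G (n + c * t) (j + D * t) := by
    intro n j x hx
    rcases lt_or_ge j (δ n) with h | h
    · rw [Gd_lt h hx, map_zero]; exact zero_mem _
    · obtain ⟨i, rfl⟩ := Nat.exists_eq_add_of_le h
      have := Gd_map' (s' := δ (n + c * t)) r (hr n) hx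
      rw [G, show δ n + i + D * t = δ (n + c * t) + i by rw [hP.per_t]; ring]
      exact this
  intro n hn j hj z hz hd
  have hc := hP.pos
  obtain ⟨n, rfl⟩ : ∃ m, n = m + 1 + 1 := ⟨n - 2, by omega⟩
  obtain ⟨z, hz', rfl⟩ := Gd_lift (V := P.V (n + 1 + 1)) (quoMk hf) (by
    rintro _ ⟨v, hv, rfl⟩; exact ⟨v, hv, rfl⟩) hz
  rw [← (quoMk_chain hf 0).comm, quoMk_eq_zero] at hd
  obtain ⟨y0, hy0⟩ := hd
  have hdz : P.d z ∈ P.G (n + 1) j := d_mem hP.mono hz'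
  have hy := hrG _ _ _ hdz
  have hfy : f (r (P.d z)) = P.d z := by rw [← hy0, hfrf]
  have e1 : n + 1 + c * t = n + c * t + 1 := by ring
  rw [e1] at hy
  have hdy := d_mem hP.mono hy
  have hdy0 : Y.d (r (P.d z)) = 0 := by
    have h1 : r (f (Y.d (r (P.d z)))) = Y.d (r (P.d z)) :=
      Gd_eqOn (r ∘ₗ f) LinearMap.id (hrf n) hdy
    rw [← h1, hf.comm, hfy, P.dd, map_zero]
  obtain ⟨y', hy', hyd⟩ := hY (n + c * t + 1) (by omega) _ (by omega) _ hy hdy0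
  have e2 : n + c * t + 1 + 1 = n + 1 + 1 + c * t := by ring
  rw [e2] at hy'
  obtain ⟨w, hw, hw'⟩ := hPx (n + 1 + 1) (by omega) j (by omega) (z - f y')
    (sub_mem hz' (hf.G_mem hP hy')) (by rw [map_sub, ← hf.comm, hyd, hfy, sub_self])
  refine ⟨quoMk hf w, Gd_map'' _ ((quoMk_chain hf 0).mem _) hw, ?_⟩
  rw [← (quoMk_chain hf 0).comm, hw', map_sub, (quoMk_eq_zero hf (x := f y')).2 ⟨y', rfl⟩, sub_zero]

end Quo

/-- A cover of `Y` by a projective complex. -/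
structure Cover (c t : ℕ) (X Y : Cx 𝒜 δ) where
  P : Cx 𝒜 δ
  ex : P.Ex 0
  m : ℕ
  i : Fin m → (P.Y →ₗ[𝒜.A] X.Y)
  s : Fin m → (X.Y →ₗ[𝒜.A] P.Y)
  hi : ∀ k, IsChain c 0 P X (i k)
  hs : ∀ k, IsChain c 0 X P (s k)
  his : ∀ x, ∑ k, s k (i k x) = x
  f : Y.Y →ₗ[𝒜.A] P.Y
  hf : IsChain c t Y P f
  finj : ∀ v ∈ Y.V (c * t), f v = 0 → v = 0
  fsurj : ∀ v ∈ P.V 0, ∃ w ∈ Y.V (c * t), f w = v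

theorem exists_cover {D : ℕ} (hP : Per δ c D) (hss : IsSemisimpleRing (R0 𝒜)) {X : Cx 𝒜 δ}
    (hX : X.Ex 0) (E : X.V 0 ≃ₗ[R0 𝒜] R0 𝒜) (Y : Cx 𝒜 δ) (t : ℕ) : Nonempty (Cover c t X Y) := by
  have := hss
  have hfin : Module.Finite (R0 𝒜) (Y.V (c * t)) := Module.Finite.iff_fg.2 (Y.fg _)
  obtain ⟨m, π, hπ⟩ := Module.Finite.exists_fin' (R0 𝒜) (Y.V (c * t))
  obtain ⟨σ, hσ⟩ := IsSemisimpleModule.lifting_property (R := R0 𝒜) (M := Fin m → R0 𝒜)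
    (N := Y.V (c * t)) π hπ LinearMap.id
  have hσ' : ∀ v, π (σ v) = v := fun v => LinearMap.congr_fun hσ v
  let i0 : Y.V (c * t) →ₗ[R0 𝒜] (X.pi m).Y :=
    { toFun := fun v k => (E.symm (σ v k) : X.Y)
      map_add' := fun a b => funext fun k => by
        rw [map_add, Pi.add_apply, map_add]; rfl
      map_smul' := fun r a => funext fun k => by
        rw [map_smul, Pi.smul_apply, map_smul]; rfl }
  have hi0 : ∀ v, i0 v ∈ (X.pi m).V 0 := fun v k => (E.symm (σ v k)).2
  let s0 : (X.pi m).V 0 →ₗ[R0 𝒜] Y.V (c * t) :=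
    { toFun := fun x => π (fun k => E ⟨x.1 k, x.2 k⟩)
      map_add' := fun a b => by
        rw [← map_add]; congr 1; funext k
        rw [Pi.add_apply, ← map_add]; rfl
      map_smul' := fun r a => by
        rw [RingHom.id_apply, ← map_smul]; congr 1; funext k
        rw [Pi.smul_apply, ← map_smul]; rfl }
  have hsi0 : ∀ v, s0 ⟨i0 v, hi0 v⟩ = v := fun v => by
    refine Eq.trans (congrArg π (funext fun k => ?_)) (hσ' v)
    exact E.apply_symm_apply _
  have hZ := pi_ex X m hX
  obtain ⟨e, he, he'⟩ := chain_exists hP (Y := X.pi m) hZ 0 (i0 ∘ₗ s0) (fun v => hi0 _)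
  have hee : e ∘ₗ e = e := by
    refine chain_ext hP hZ (t := 0) (he.comp he) he fun v hv => ?_
    have h1 : e v = i0 (s0 ⟨v, hv⟩) := he' ⟨v, hv⟩
    have h2 : e (i0 (s0 ⟨v, hv⟩)) = i0 (s0 ⟨_, hi0 _⟩) := he' ⟨_, hi0 _⟩
    rw [LinearMap.comp_apply, h1, h2, hsi0]
  obtain ⟨f1, hf1, hf1'⟩ := chain_exists hP (Y := Y) hZ t i0 hi0
  have hef : e ∘ₗ f1 = f1 := by
    have h0 := he.comp hf1
    rw [zero_add] at h0
    refine chain_ext hP hZ h0 hf1 fun v hv => ?_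
    have h1 : f1 v = i0 ⟨v, hv⟩ := hf1' ⟨v, hv⟩
    have h2 : e (i0 ⟨v, hv⟩) = i0 (s0 ⟨_, hi0 _⟩) := he' ⟨_, hi0 _⟩
    rw [LinearMap.comp_apply, h1, h2, hsi0]
  let i : LinearMap.range e →ₗ[𝒜.A] (X.pi m).Y := (LinearMap.range e).subtype
  let s : (X.pi m).Y →ₗ[𝒜.A] LinearMap.range e := e.rangeRestrict
  have hsi : ∀ x, s (i x) = x := by
    rintro ⟨_, x, rfl⟩
    exact Subtype.ext (LinearMap.congr_fun hee x)
  have his : IsChain 0 0 (X.pi m) (X.pi m) (i ∘ₗ s) := he.congr0 0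
  have si_e : ∀ x, s (e x) = s x := fun x => hsi (s x)
  have cs := retract_s (c := c) (X.pi m) _ i s hsi his
  have ci := retract_i (c := c) (X.pi m) _ i s hsi his
  refine ⟨⟨retract (X.pi m) _ i s hsi his, retract_ex _ _ _ _ _ _ hZ, m,
    fun k => LinearMap.proj k ∘ₗ i, fun k => s ∘ₗ LinearMap.single 𝒜.A (fun _ : Fin m => X.Y) k,
    fun k => (pi_proj X m k).comp ci, fun k => cs.comp (pi_single X m k), ?_, s ∘ₗ f1,
    by simpa using cs.comp hf1, ?_, ?_⟩⟩
  · intro x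
    refine Eq.trans ?_ (hsi x)
    refine (map_sum s _ Finset.univ).symm.trans (congrArg s ?_)
    exact Finset.univ_sum_single (M := fun _ : Fin m => X.Y) (i x)
  · intro v hv h
    have h1 : e (f1 v) = 0 := congrArg i h
    have h2 : f1 v = 0 := (LinearMap.congr_fun hef v).symm.trans h1
    have h3 : i0 ⟨v, hv⟩ = 0 := (hf1' ⟨v, hv⟩).symm.trans h2
    have h4 := hsi0 ⟨v, hv⟩
    have h5 : (⟨i0 ⟨v, hv⟩, hi0 _⟩ : (X.pi m).V 0) = 0 := Subtype.ext h3
    rw [h5, map_zero] at h4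
    exact (congrArg Subtype.val h4).symm
  · rintro _ ⟨x, hx, rfl⟩
    refine ⟨s0 ⟨x, hx⟩, (s0 ⟨x, hx⟩).2, ?_⟩
    show s (f1 (s0 ⟨x, hx⟩)) = s x
    have h1 : f1 (s0 ⟨x, hx⟩) = i0 (s0 ⟨x, hx⟩) := hf1' (s0 ⟨x, hx⟩)
    have h2 : e x = i0 (s0 ⟨x, hx⟩) := he' ⟨x, hx⟩
    rw [h1, ← h2, si_e]

end Cx
end CxCover
end GradedAlg


namespace GradedAlg

section GModApi

variable {F : Type} [Field F] {𝒜 : GradedAlg F}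

theorem indep_of_det {ι M : Type} [AddCommGroup M] [Module F M] (p : ι → Submodule F M)
    (h : ∀ i, ∀ x ∈ p i, x ∈ ⨆ j, ⨆ (_ : j ≠ i), p j → x = 0) : iSupIndep p :=
  fun i => Submodule.disjoint_def.2 (h i)

namespace GMod
variable (M : 𝒜.GMod)

/-- The direct sum decomposition of a graded module. -/
instance decomp : DirectSum.Decomposition M.grading :=
  DirectSum.IsInternal.chooseDecomposition M.grading
    (DirectSum.isInternal_submodule_of_iSupIndep_of_iSup_eq_top M.indep M.sup_eq_top)

/-- Homogeneous component. -/
def proj (j : ℤ) : M.M →ₗ[F] M.M where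
  toFun x := (DirectSum.decompose M.grading x j : M.M)
  map_add' x y := by simp
  map_smul' c x := by
    rw [DirectSum.decompose_smul]; rfl

theorem proj_mem (j : ℤ) (x : M.M) : M.proj j x ∈ M.grading j :=
  (DirectSum.decompose M.grading x j).2

theorem proj_same {j : ℤ} {x : M.M} (h : x ∈ M.grading j) : M.proj j x = x :=
  DirectSum.decompose_of_mem_same M.grading h

theorem proj_ne {i j : ℤ} {x : M.M} (h : x ∈ M.grading i) (hij : i ≠ j) : M.proj j x = 0 :=
  DirectSum.decompose_of_mem_ne M.grading h hij

theorem eq_zero_of_mem {i j : ℤ} {x : M.M} (h : x ∈ M.grading i) (h' : x ∈ M.grading j)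
    (hij : i ≠ j) : x = 0 := by rw [← M.proj_same h', M.proj_ne h hij]

theorem mem_of_proj {Q : AddSubgroup M.M} {x : M.M} (h : ∀ j, M.proj j x ∈ Q) : x ∈ Q := by
  classical
  rw [← DirectSum.sum_support_decompose M.grading x]
  exact sum_mem fun j _ => h j

theorem eq_of_proj {x y : M.M} (h : ∀ j, M.proj j x = M.proj j y) : x = y := by
  rw [← sub_eq_zero]
  have : x - y ∈ (⊥ : AddSubgroup M.M) := M.mem_of_proj fun j => by
    rw [map_sub, h, sub_self]; exact zero_mem _
  simpa using this

theorem induction {p : M.M → Prop} (h0 : p 0) (ha : ∀ x y, p x → p y → p (x + y))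
    (hm : ∀ j, ∀ x ∈ M.grading j, p x) (x : M.M) : p x := by
  have : x ∈ ⨆ j, M.grading j := by rw [M.sup_eq_top]; trivial
  exact Submodule.iSup_induction M.grading (motive := p) this hm h0 ha

theorem proj_smul {i : ℕ} {j k : ℤ} (hk : (i : ℤ) + j = k) {a : 𝒜.A} (ha : a ∈ 𝒜.grading i) (x : M.M) :
    M.proj k (a • x) = a • M.proj j x := by
  induction x using M.induction with
  | h0 => simp
  | ha x y hx hy => rw [smul_add, map_add, hx, hy, map_add, smul_add]
  | hm l x hx =>
    have h1 := M.smul_mem ha hx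
    by_cases h : l = j
    · subst h; rw [M.proj_same hx, ← hk, M.proj_same h1]
    · rw [M.proj_ne hx h, M.proj_ne h1 (by omega), smul_zero]

end GMod

theorem GHom.proj {M N : 𝒜.GMod} (f : GHom M N) (j : ℤ) (x : M.M) :
    f.lin (M.proj j x) = N.proj j (f.lin x) := by
  induction x using M.induction with
  | h0 => simp
  | ha x y hx hy => simp only [map_add, hx, hy]
  | hm l x hx =>
    by_cases h : l = j
    · subst h; rw [M.proj_same hx, N.proj_same (f.grad _ _ hx)]
    · rw [M.proj_ne hx h, N.proj_ne (f.grad _ _ hx) h, map_zero]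

/-- A homogeneous element of the range has a homogeneous preimage. -/
theorem GHom.lift {M N : 𝒜.GMod} (f : GHom M N) {j : ℤ} {y : N.M} (hy : y ∈ N.grading j)
    (h : y ∈ LinearMap.range f.lin) : ∃ x ∈ M.grading j, f.lin x = y := by
  obtain ⟨x, rfl⟩ := h
  exact ⟨M.proj j x, M.proj_mem j x, by rw [f.proj, N.proj_same hy]⟩

theorem mem_jideal {i : ℕ} (hi : i ≠ 0) {a : 𝒜.A} (ha : a ∈ 𝒜.grading i) : a ∈ 𝒜.jideal := by
  refine (HomogeneousIdeal.mem_irrelevant_iff 𝒜.grading a).2 ?_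
  rw [GradedRing.proj_apply]
  exact DirectSum.decompose_of_mem_ne 𝒜.grading ha hi

theorem mem_jideal_iff {a : 𝒜.A} : a ∈ 𝒜.jideal ↔ (DirectSum.decompose 𝒜.grading a 0 : 𝒜.A) = 0 := by
  refine (HomogeneousIdeal.mem_irrelevant_iff 𝒜.grading a).trans ?_
  rw [GradedRing.proj_apply]

end GModApi
end GradedAlg


namespace GradedAlg

section BSide

variable {F : Type} [Field F] {𝒜 : GradedAlg F}

namespace Cx
variable {δ : ℕ → ℕ} {c : ℕ}

instance modFY (X : Cx 𝒜 δ) : Module F X.Y := Module.compHom X.Y (algebraMap F 𝒜.A)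

theorem F_smul (X : Cx 𝒜 δ) (a : F) (x : X.Y) : a • x = algebraMap F 𝒜.A a • x := rfl

instance (X : Cx 𝒜 δ) : IsScalarTower F 𝒜.A X.Y :=
  ⟨fun a b x => by rw [F_smul, Algebra.smul_def, mul_smul]⟩

instance (X : Cx 𝒜 δ) : SMulCommClass 𝒜.A F X.Y :=
  ⟨fun b a x => by rw [F_smul, F_smul, ← mul_smul, ← mul_smul, Algebra.commutes]⟩

instance (X : Cx 𝒜 δ) : SMulCommClass F 𝒜.A X.Y := SMulCommClass.symm _ _ _

/-- Morphisms of the underlying modules. -/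
abbrev Hm (Y X : Cx 𝒜 δ) : Type := Y.Y →ₗ[𝒜.A] X.Y

variable (c)

/-- Chain maps of degree `n`. -/
def CS (Y X : Cx 𝒜 δ) (n : ℕ) : Submodule F (Hm Y X) where
  carrier := {f | IsChain c n Y X f}
  add_mem' := IsChain.add
  zero_mem' := IsChain.zero
  smul_mem' a f hf :=
    { lt := fun l hl v hv => by rw [LinearMap.smul_apply, hf.lt l hl v hv, smul_zero]
      mem := fun l v hv => by
        rw [LinearMap.smul_apply, F_smul]
        exact (X.V l).smul_mem (⟨algebraMap F 𝒜.A a, SetLike.algebraMap_mem_graded _ a⟩ : R0 𝒜)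
          (hf.mem l v hv)
      comm := fun y => by
        rw [LinearMap.smul_apply, LinearMap.smul_apply, hf.comm, F_smul, F_smul, map_smul] }

theorem mem_CS {Y X : Cx 𝒜 δ} {n : ℕ} {f : Hm Y X} : f ∈ CS c Y X n ↔ IsChain c n Y X f := Iff.rfl

theorem CS_indep (hc : 0 < c) (Y X : Cx 𝒜 δ) : iSupIndep (CS c Y X) := by
  refine indep_of_det _ fun n g hg h => ?_
  choose π hπ hπ' using fun n => X.free_single n (X.V n).subtype
  refine Y.ext_on fun l v hv => ?_
  rw [LinearMap.zero_apply]
  rcases lt_or_ge l (c * n) with hl | hl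
  · exact hg.lt l hl v hv
  · obtain ⟨q, rfl⟩ := Nat.exists_eq_add_of_le hl
    have hv' := hv
    rw [add_comm] at hv'
    have h1 : π q (g v) = g v := hπ q ⟨g v, hg.mem q v hv'⟩
    rw [← h1]
    have key : ∀ g' : Hm Y X, g' ∈ (⨆ j, ⨆ (_ : j ≠ n), CS c Y X j) → π q (g' v) = 0 := by
      intro g' hg'
      refine Submodule.iSup_induction _ (motive := fun g' : Hm Y X => π q (g' v) = 0) hg' ?_ ?_ ?_
      · intro j x hx
        by_cases hj : j = n
        · rw [iSup_neg (by simpa using hj)] at hx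
          rw [(Submodule.mem_bot F).1 hx]; simp
        · rw [iSup_pos hj] at hx
          rcases lt_or_ge (c * n + q) (c * j) with h2 | h2
          · rw [hx.lt _ h2 v hv, map_zero]
          · obtain ⟨m, hm⟩ := Nat.exists_eq_add_of_le h2
            rw [hm, add_comm] at hv
            refine hπ' q m ?_ _ (hx.mem m v hv)
            rintro rfl
            have : c * n = c * j := by omega
            exact hj (Nat.eq_of_mul_eq_mul_left hc this).symm
      · simp
      · intro x y hx hy
        rw [LinearMap.add_apply, map_add, hx, hy, add_zero]
    exact key g h

/-- Finite sums of chain maps. -/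
def CT (Y X : Cx 𝒜 δ) : Submodule F (Hm Y X) := ⨆ n, CS c Y X n

theorem CT_comp {Y X W : Cx 𝒜 δ} {g : Hm X W} {f : Hm Y X} (hg : g ∈ CT c X W) (hf : f ∈ CT c Y X) :
    g ∘ₗ f ∈ CT c Y W := by
  refine Submodule.iSup_induction _ (motive := fun g : Hm X W => g ∘ₗ f ∈ CT c Y W) hg ?_ ?_ ?_
  · intro m g hg
    refine Submodule.iSup_induction _ (motive := fun f : Hm Y X => g ∘ₗ f ∈ CT c Y W) hf ?_ ?_ ?_
    · intro n f hf
      exact Submodule.mem_iSup_of_mem (m + n) (IsChain.comp hg hf)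
    · rw [LinearMap.comp_zero]; exact zero_mem _
    · intro x y hx hy; rw [LinearMap.comp_add]; exact add_mem hx hy
  · rw [LinearMap.zero_comp]; exact zero_mem _
  · intro x y hx hy; rw [LinearMap.add_comp]; exact add_mem hx hy

theorem CS_le_CT {Y X : Cx 𝒜 δ} {n : ℕ} {f : Hm Y X} (hf : IsChain c n Y X f) : f ∈ CT c Y X :=
  Submodule.mem_iSup_of_mem (p := CS c Y X) n hf

/-- The endomorphism algebra. -/
def BS (X : Cx 𝒜 δ) : Subalgebra F (Module.End 𝒜.A X.Y) where
  carrier := {f | f ∈ CT c X X}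
  mul_mem' hf hg := CT_comp c hf hg
  add_mem' hf hg := (CT c X X).add_mem hf hg
  algebraMap_mem' a := by
    have h : algebraMap F (Module.End 𝒜.A X.Y) a = a • (LinearMap.id : Hm X X) := rfl
    show _ ∈ CT c X X
    rw [h]
    exact Submodule.smul_mem _ a (CS_le_CT c (n := 0) IsChain.id)

theorem comap_iSup {ι M N : Type} [AddCommGroup M] [Module F M] [AddCommGroup N] [Module F N]
    (i : N →ₗ[F] M) (hi : Function.Injective i)
    (p : ι → Submodule F M) (hq : LinearMap.range i = ⨆ k, p k) :
    (⨆ k, (p k).comap i) = ⊤ := by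
  refine Submodule.map_injective_of_injective hi ?_
  rw [Submodule.map_iSup, Submodule.map_top, hq]
  refine iSup_congr fun k => ?_
  rw [Submodule.map_comap_eq, hq]
  exact inf_eq_right.2 (le_iSup p k)

theorem comap_indep {ι M N : Type} [AddCommGroup M] [Module F M] [AddCommGroup N] [Module F N]
    (i : N →ₗ[F] M) (hi : Function.Injective i)
    (p : ι → Submodule F M) (hq : iSupIndep p) :
    iSupIndep fun k => (p k).comap i := by
  refine indep_of_det _ fun k x hx h => hi ?_
  rw [map_zero]
  refine (Submodule.disjoint_def.1 (hq k)) _ hx ?_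
  have : (⨆ j, ⨆ (_ : j ≠ k), (p j).comap i) ≤ (⨆ j, ⨆ (_ : j ≠ k), p j).comap i :=
    iSup_le fun j => iSup_le fun hj => Submodule.comap_mono (le_iSup_of_le j (le_iSup_of_le hj le_rfl))
  exact this h

/-- Grading of the endomorphism algebra. -/
def BGr (X : Cx 𝒜 δ) (n : ℕ) : Submodule F (BS c X) := (CS c X X n).comap (BS c X).val.toLinearMap

theorem BGr_internal (hc : 0 < c) (X : Cx 𝒜 δ) : DirectSum.IsInternal (BGr c X) := by
  refine DirectSum.isInternal_submodule_of_iSupIndep_of_iSup_eq_top ?_ ?_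
  · exact comap_indep _ Subtype.val_injective _ (CS_indep c hc X X)
  · refine comap_iSup _ Subtype.val_injective _ ?_
    ext f
    constructor
    · rintro ⟨x, rfl⟩; exact x.2
    · intro hf; exact ⟨⟨f, hf⟩, rfl⟩

/-- The graded algebra `B`. -/
def BA (hc : 0 < c) (X : Cx 𝒜 δ) : GradedAlg F where
  A := BS c X
  grading := BGr c X
  graded :=
    { one_mem := IsChain.id (Y := X)
      mul_mem := fun _ _ _ _ hx hy => IsChain.comp hx hy
      toDecomposition := DirectSum.IsInternal.chooseDecomposition _ (BGr_internal c hc X) }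

/-- The type of sums of chain maps `Y → X`. -/
def NT (X Y : Cx 𝒜 δ) : Type := ↥(CT c Y X)

instance (X Y : Cx 𝒜 δ) : AddCommGroup (NT c X Y) := inferInstanceAs (AddCommGroup ↥(CT c Y X))
instance (X Y : Cx 𝒜 δ) : Module F (NT c X Y) := inferInstanceAs (Module F ↥(CT c Y X))

/-- Underlying map. -/
def nval (X Y : Cx 𝒜 δ) : NT c X Y →ₗ[F] Hm Y X := (CT c Y X).subtype

theorem nval_inj (X Y : Cx 𝒜 δ) : Function.Injective (nval c X Y) := Subtype.val_injective

theorem nval_mem (X Y : Cx 𝒜 δ) (x : NT c X Y) : nval c X Y x ∈ CT c Y X := x.2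

instance (X Y : Cx 𝒜 δ) : Module (BS c X) (NT c X Y) where
  smul b g := ⟨b.1 ∘ₗ g.1, CT_comp c b.2 g.2⟩
  one_smul g := Subtype.ext rfl
  mul_smul a b g := Subtype.ext rfl
  smul_zero a := Subtype.ext (LinearMap.comp_zero _)
  smul_add a g h := Subtype.ext (LinearMap.comp_add _ _ _)
  add_smul a b g := Subtype.ext (LinearMap.add_comp _ _ _)
  zero_smul g := Subtype.ext (LinearMap.zero_comp _)

theorem nval_smul (X Y : Cx 𝒜 δ) (b : BS c X) (g : NT c X Y) :
    nval c X Y (b • g) = b.1 ∘ₗ nval c X Y g := rfl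

instance (X Y : Cx 𝒜 δ) : IsScalarTower F (BS c X) (NT c X Y) :=
  ⟨fun _ _ _ => Subtype.ext rfl⟩

instance (X Y : Cx 𝒜 δ) : SMulCommClass (BS c X) F (NT c X Y) :=
  ⟨fun b a g => Subtype.ext (by
    show b.1 ∘ₗ (a • g.1) = a • (b.1 ∘ₗ g.1)
    ext x
    simp only [LinearMap.comp_apply, LinearMap.smul_apply, F_smul, map_smul])⟩

/-- Grading with offset `s`. -/
def NGr (X Y : Cx 𝒜 δ) (s j : ℤ) : Submodule F (NT c X Y) :=
  if s ≤ j then (CS c Y X (j - s).toNat).comap (nval c X Y) else ⊥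

theorem mem_NGr {X Y : Cx 𝒜 δ} {s j : ℤ} {n : ℕ} (h : (n : ℤ) + s = j)
    {x : NT c X Y} : x ∈ NGr c X Y s j ↔ IsChain c n Y X (nval c X Y x) := by
  rw [NGr, if_pos (by omega), show (j - s).toNat = n by omega]
  rfl

theorem NGr_cases {X Y : Cx 𝒜 δ} {s j : ℤ}
    {x : NT c X Y} (hx : x ∈ NGr c X Y s j) :
    (j < s ∧ x = 0) ∨ ∃ n : ℕ, (n : ℤ) + s = j ∧ IsChain c n Y X (nval c X Y x) := by
  rcases lt_or_ge j s with h | h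
  · rw [NGr, if_neg (by omega)] at hx
    exact Or.inl ⟨h, by simpa using hx⟩
  · have e : ((j - s).toNat : ℤ) + s = j := by omega
    exact Or.inr ⟨_, e, (mem_NGr c e).1 hx⟩

/-- The graded `B`-module of sums of chain maps `Y → X`. -/
def NG (hc : 0 < c) (X Y : Cx 𝒜 δ) (s : ℤ) : (BA c hc X).GMod where
  M := NT c X Y
  modA := inferInstanceAs (Module (BS c X) (NT c X Y))
  tower := inferInstanceAs (IsScalarTower F (BS c X) (NT c X Y))
  scomm := inferInstanceAs (SMulCommClass (BS c X) F (NT c X Y))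
  grading := NGr c X Y s
  sup_eq_top := by
    have h := comap_iSup (nval c X Y) (nval_inj c X Y)
      (CS c Y X) (Submodule.range_subtype _)
    rw [eq_top_iff, ← h]
    refine iSup_le fun n => le_iSup_of_le (n + s) fun x hx => ?_
    exact (mem_NGr c rfl).2 hx
  indep := by
    have h := comap_indep (nval c X Y) (nval_inj c X Y) (CS c Y X) (CS_indep c hc Y X)
    refine indep_of_det _ fun j x hx hx' => ?_
    rcases NGr_cases c hx with h1 | ⟨n, rfl, h1⟩
    · exact h1.2
    · refine (Submodule.disjoint_def.1 (h n)) _ h1 ?_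
      have : (⨆ j, ⨆ (_ : j ≠ n + s), NGr c X Y s j) ≤
          (⨆ j, ⨆ (_ : j ≠ n), (CS c Y X j).comap (nval c X Y)) := by
        refine iSup_le fun j => iSup_le fun hj y hy => ?_
        rcases NGr_cases c hy with h1 | ⟨m, rfl, h1⟩
        · rw [h1.2]; exact zero_mem _
        · exact Submodule.mem_iSup_of_mem m (Submodule.mem_iSup_of_mem (by
            rintro rfl; exact hj rfl) h1)
      exact this hx'
  smul_mem := by
    intro i j a m ha hm
    rcases NGr_cases c hm with h1 | ⟨n, rfl, h1⟩
    · obtain rfl := h1.2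
      have : (show BS c X from a) • (0 : NT c X Y) = 0 := smul_zero _
      exact Eq.subst (motive := fun z => z ∈ NGr c X Y s (i + j)) this.symm (zero_mem _)
    · refine (mem_NGr c (n := i + n) (by push_cast; ring)).2 ?_
      exact IsChain.comp ha h1

variable {c}
section Pre
variable {hc : 0 < c} {X : Cx 𝒜 δ} {Y Y' : Cx 𝒜 δ} {t : ℕ}

/-- Underlying map. -/
def nv {s : ℤ} : (NG c hc X Y s).M →ₗ[F] Hm Y X := nval c X Y

theorem nv_inj {s : ℤ} : Function.Injective (nv (hc := hc) (X := X) (Y := Y) (s := s)) :=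
  nval_inj c X Y

/-- Constructor. -/
def nmk (s : ℤ) (g : Hm Y X) (hg : g ∈ CT c Y X) : (NG c hc X Y s).M := ⟨g, hg⟩

theorem nv_nmk {s : ℤ} (g : Hm Y X) (hg : g ∈ CT c Y X) : nv (nmk (hc := hc) s g hg) = g := rfl

theorem nv_mem {s : ℤ} (x : (NG c hc X Y s).M) : nv x ∈ CT c Y X := nval_mem c X Y x

/-- Underlying map. -/
def bv (b : (BA c hc X).A) : Hm X X := (show BS c X from b).1

/-- Constructor. -/
def bmk (hc : 0 < c) (g : Hm X X) (hg : g ∈ CT c X X) : (BA c hc X).A := (⟨g, hg⟩ : BS c X)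

theorem bv_inj {a b : (BA c hc X).A} (h : bv a = bv b) : a = b := Subtype.ext h

theorem bv_mem (b : (BA c hc X).A) : bv b ∈ CT c X X := (show BS c X from b).2

theorem bv_gr {n : ℕ} {b : (BA c hc X).A} : b ∈ (BA c hc X).grading n ↔ IsChain c n X X (bv b) :=
  Iff.rfl

theorem nv_smul {s : ℤ} (b : (BA c hc X).A) (x : (NG c hc X Y s).M) : nv (b • x) = bv b ∘ₗ nv x :=
  rfl

theorem mem_NG {s j : ℤ} {n : ℕ} (h : (n : ℤ) + s = j) {x : (NG c hc X Y s).M} :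
    x ∈ (NG c hc X Y s).grading j ↔ IsChain c n Y X (nv x) := mem_NGr c h

theorem NG_cases {s j : ℤ} {x : (NG c hc X Y s).M} (hx : x ∈ (NG c hc X Y s).grading j) :
    (j < s ∧ x = 0) ∨ ∃ n : ℕ, (n : ℤ) + s = j ∧ IsChain c n Y X (nv x) := NGr_cases c hx

variable (hc) (X)
/-- Precomposition with a chain map. -/
def preL {q : Hm Y Y'} (hq : IsChain c t Y Y' q) (s : ℤ) (s' : ℤ) :
    (NG c hc X Y' s').M →ₗ[(BA c hc X).A] (NG c hc X Y s).M where
  toFun g := nmk s (nv g ∘ₗ q) (CT_comp c (nv_mem g) (CS_le_CT c hq))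
  map_add' _ _ := rfl
  map_smul' _ _ := rfl

theorem nv_preL {q : Hm Y Y'} (hq : IsChain c t Y Y' q) (s : ℤ) (s' : ℤ) (g) :
    nv (preL hc X hq s s' g) = nv g ∘ₗ q := rfl

/-- Precomposition with a chain map, as a graded map. -/
def preG {q : Hm Y Y'} (hq : IsChain c t Y Y' q) (s s' : ℤ) (hs : s' = s + t) :
    GHom (NG c hc X Y' s') (NG c hc X Y s) where
  lin := preL hc X hq s s'
  grad j x hx := by
    rcases NG_cases hx with h1 | ⟨n, rfl, h1⟩
    · rw [h1.2, map_zero]; exact zero_mem _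
    · refine (mem_NG (n := n + t) (by push_cast; rw [hs]; ring)).2 ?_
      exact IsChain.comp h1 hq

end Pre

section Proj
variable (hc : 0 < c) {X P : Cx 𝒜 δ} {m : ℕ} {i : Fin m → Hm P X} {s : Fin m → Hm X P}

theorem sum_expand (his : ∀ x, ∑ k, s k (i k x) = x) (g : Hm P X) : ∑ k, (g ∘ₗ s k) ∘ₗ i k = g := by
  ext x
  rw [LinearMap.sum_apply]
  simp only [LinearMap.comp_apply]
  rw [← map_sum, his]

/-- the coefficient -/
def coef (hs : ∀ k, IsChain c 0 X P (s k)) {r : ℤ} (g : (NG c hc X P r).M) (k : Fin m) :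
    (BA c hc X).A :=
  bmk hc (nv g ∘ₗ s k) (CT_comp c (nv_mem g) (CS_le_CT c (hs k)))

/-- the generator -/
def gen (hi : ∀ k, IsChain c 0 P X (i k)) (r : ℤ) (k : Fin m) : (NG c hc X P r).M :=
  nmk r (i k) (CS_le_CT c (hi k))

theorem expand (hi : ∀ k, IsChain c 0 P X (i k)) (hs : ∀ k, IsChain c 0 X P (s k))
    (his : ∀ x, ∑ k, s k (i k x) = x) {r : ℤ} (g : (NG c hc X P r).M) :
    ∑ k, coef hc hs g k • gen hc hi r k = g := by
  refine nv_inj ?_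
  rw [map_sum]
  exact sum_expand his (nv g)

theorem NG_gen (hi : ∀ k, IsChain c 0 P X (i k)) (hs : ∀ k, IsChain c 0 X P (s k))
    (his : ∀ x, ∑ k, s k (i k x) = x) (r : ℤ) : (NG c hc X P r).GenInDeg r := by
  rw [GMod.GenInDeg, eq_top_iff]
  intro g _
  rw [← expand hc hi hs his g]
  refine Submodule.sum_mem _ fun k _ => ?_
  refine Submodule.smul_mem _ _ (Submodule.subset_span ?_)
  exact (mem_NG (n := 0) (by simp)).2 (hi k)

theorem NG_fg (hi : ∀ k, IsChain c 0 P X (i k)) (hs : ∀ k, IsChain c 0 X P (s k))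
    (his : ∀ x, ∑ k, s k (i k x) = x) (r : ℤ) :
    Module.Finite (BA c hc X).A (NG c hc X P r).M := by
  classical
  refine ⟨⟨Finset.univ.image (gen hc hi r), ?_⟩⟩
  rw [eq_top_iff]
  intro g _
  rw [← expand hc hi hs his g]
  refine Submodule.sum_mem _ fun k _ => ?_
  refine Submodule.smul_mem _ _ (Submodule.subset_span ?_)
  simp

theorem NG_proj (hi : ∀ k, IsChain c 0 P X (i k)) (hs : ∀ k, IsChain c 0 X P (s k))
    (his : ∀ x, ∑ k, s k (i k x) = x) (r : ℤ) :
    Module.Projective (BA c hc X).A (NG c hc X P r).M := by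
  let a : (NG c hc X P r).M →ₗ[(BA c hc X).A] (Fin m → (BA c hc X).A) :=
    { toFun := fun g k => coef hc hs g k
      map_add' := fun _ _ => rfl
      map_smul' := fun _ _ => rfl }
  let b : (Fin m → (BA c hc X).A) →ₗ[(BA c hc X).A] (NG c hc X P r).M :=
    Fintype.linearCombination (BA c hc X).A (gen hc hi r)
  refine Module.Projective.of_split a b ?_
  ext1 g
  exact (Fintype.linearCombination_apply (BA c hc X).A (gen hc hi r)
    (fun k => coef hc hs g k)).trans (expand hc hi hs his g)

/-- precomposition with a chain map of positive degree lands in the radical -/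
theorem preL_radical (hi : ∀ k, IsChain c 0 P X (i k)) (hs : ∀ k, IsChain c 0 X P (s k))
    (his : ∀ x, ∑ k, s k (i k x) = x) {P' : Cx 𝒜 δ} {q : Hm P P'} (hq : IsChain c 1 P P' q)
    (r r' : ℤ) (g : (NG c hc X P' r').M) :
    preL hc X hq r r' g ∈ (BA c hc X).jideal • (⊤ : Submodule (BA c hc X).A (NG c hc X P r).M) := by
  induction g using GMod.induction with
  | h0 => rw [map_zero]; exact zero_mem _
  | ha x y hx hy => rw [map_add]; exact add_mem hx hy
  | hm j g hg =>
    rcases NG_cases hg with h1 | ⟨n, rfl, h1⟩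
    · rw [h1.2, map_zero]; exact zero_mem _
    · rw [← expand hc hi hs his (preL hc X hq r r' g)]
      refine Submodule.sum_mem _ fun k _ => ?_
      refine Submodule.smul_mem_smul ?_ trivial
      refine mem_jideal (i := n + 1) (by omega) ?_
      exact IsChain.comp (n := 0) (IsChain.comp h1 hq) (hs k)

end Proj

end Cx
end BSide
end GradedAlg


namespace GradedAlg

section BRes

variable {F : Type} [Field F] {𝒜 : GradedAlg F}

namespace Cx
variable {δ : ℕ → ℕ} {c : ℕ}

theorem quo_V0 {Y P : Cx 𝒜 δ} {t : ℕ} {f : Y.Y →ₗ[𝒜.A] P.Y} (hf : IsChain c t Y P f)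
    (fsurj : ∀ v ∈ P.V 0, ∃ w ∈ Y.V (c * t), f w = v) : (quo hf).V 0 = ⊥ := by
  rw [eq_bot_iff]
  rintro _ ⟨v, hv, rfl⟩
  obtain ⟨w, -, rfl⟩ := fsurj v hv
  exact (quoMk_eq_zero hf).2 ⟨w, rfl⟩

/-- A stage of the construction of the resolution over `B`. -/
structure Stage (c : ℕ) (X : Cx 𝒜 δ) where
  Y : Cx 𝒜 δ
  t : ℕ
  ex : Y.Ex (c * t + 1)
  van : ∀ n, n < t → Y.V (c * n) = ⊥
  cov : Cover c t X Y

section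
variable {D : ℕ} (hP : Per δ c D) (hss : IsSemisimpleRing (R0 𝒜)) {X : Cx 𝒜 δ}
    (hX : X.Ex 0) (E : X.V 0 ≃ₗ[R0 𝒜] R0 𝒜)

/-- Next stage. -/
def Stage.next (S : Stage c X) : Stage c X where
  Y := quo S.cov.hf
  t := 1
  ex := by
    have := quo_ex S.cov.hf hP hss S.ex S.cov.ex S.cov.finj
    rwa [mul_one]
  van n hn := by
    obtain rfl : n = 0 := by omega
    exact quo_V0 S.cov.hf S.cov.fsurj
  cov := Classical.choice (exists_cover hP hss hX E _ 1)

/-- The connecting map. -/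
def Stage.q (S : Stage c X) : Hm S.cov.P (S.next hP hss hX E).cov.P :=
  (S.next hP hss hX E).cov.f ∘ₗ quoMk S.cov.hf

theorem Stage.q_chain (S : Stage c X) : IsChain c 1 _ _ (S.q hP hss hX E) :=
  IsChain.comp (m := 1) (n := 0) (S.next hP hss hX E).cov.hf (quoMk_chain S.cov.hf c)

variable {hP hss hX E}

theorem pre_surj (hP : Per δ c D) (hss : IsSemisimpleRing (R0 𝒜)) (hX : X.Ex 0)
    (S : Stage c X) (s s' : ℤ) (hs : s' = s + S.t) :
    Function.Surjective (preG hP.pos X S.cov.hf s s' hs).lin := by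
  intro g
  rw [← LinearMap.mem_range]
  induction g using GMod.induction with
  | h0 => exact zero_mem _
  | ha x y hx hy => exact add_mem hx hy
  | hm j g hg =>
    rcases NG_cases hg with h1 | ⟨n, rfl, h1⟩
    · rw [h1.2]; exact zero_mem _
    · rcases lt_or_ge n S.t with hn | hn
      · have : nv g = 0 := chain_unique hP hX h1 (fun v hv => by
          rw [S.van n hn] at hv
          rw [(Submodule.mem_bot _).1 hv, map_zero])
        have : g = 0 := nv_inj (this.trans (map_zero nv).symm)
        rw [this]; exact zero_mem _
      · obtain ⟨m, rfl⟩ := Nat.exists_eq_add_of_le' hn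
        obtain ⟨r, hr, hrf⟩ := split hP hss S.ex S.cov.hf S.cov.finj
        have e : c * m + c * S.t = 0 + c * (m + S.t) := by ring
        obtain ⟨h, hh, hh'⟩ := chain_exists hP (Y := S.cov.P) hX m
          (((nv g ∘ₗ r).restrictScalars (R0 𝒜)) ∘ₗ (S.cov.P.V (c * m)).subtype) (by
            rintro ⟨v, hv⟩
            have := hr _ v hv
            rw [e] at this
            exact h1.mem 0 _ this)
        refine ⟨nmk s' h (CS_le_CT c hh), nv_inj ?_⟩
        refine chain_ext hP hX (IsChain.comp hh S.cov.hf) h1 fun v hv => ?_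
        rw [← zero_add (c * (m + S.t)), ← e] at hv
        have h2 := hh' ⟨_, S.cov.hf.mem _ v hv⟩
        refine Eq.trans h2 ?_
        show nv g (r (S.cov.f v)) = nv g v
        rw [hrf _ v hv]

theorem pre_mk_inj (hc : 0 < c) {Y P : Cx 𝒜 δ} {t : ℕ} {f : Y.Y →ₗ[𝒜.A] P.Y} (hf : IsChain c t Y P f) (s : ℤ)
    {g : (NG c hc X (quo hf) s).M} (h : preL hc X (quoMk_chain hf c) s s g = 0) : g = 0 := by
  have h2 : nv g ∘ₗ quoMk hf = 0 := congrArg nv h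
  refine nv_inj (Eq.trans ?_ (map_zero nv).symm)
  ext x
  obtain ⟨x, rfl⟩ := quoMk_surj hf x
  exact LinearMap.congr_fun h2 x

theorem pre_ker (hc : 0 < c) {Y P : Cx 𝒜 δ} {t : ℕ} {f : Y.Y →ₗ[𝒜.A] P.Y} (hf : IsChain c t Y P f)
    (s s' : ℤ) (hs : s' = s + t) {g : (NG c hc X P s').M} (h : (preG hc X hf s s' hs).lin g = 0) :
    ∃ g', preL hc X (quoMk_chain hf c) s' s' g' = g := by
  rw [← LinearMap.mem_range, ← Submodule.mem_toAddSubgroup]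
  refine GMod.mem_of_proj _ fun j => ?_
  rw [Submodule.mem_toAddSubgroup, LinearMap.mem_range]
  have h1 : (preG hc X hf s s' hs).lin ((NG c hc X P s').proj j g) = 0 := by
    rw [GHom.proj, h, map_zero]
  have h2 := (NG c hc X P s').proj_mem j g
  generalize (NG c hc X P s').proj j g = g' at h1 h2
  rcases NG_cases h2 with h3 | ⟨n, rfl, h3⟩
  · exact ⟨0, by rw [map_zero, h3.2]⟩
  · have h4 : nv g' ∘ₗ f = 0 := congrArg nv h1
    let l : Hm (quo hf) X := (LinearMap.range f).liftQ (nv g') (by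
      rintro _ ⟨y, rfl⟩; exact LinearMap.congr_fun h4 y)
    have hl : ∀ x, l (quoMk hf x) = nv g' x := fun x => rfl
    have hlc : IsChain c n (quo hf) X l :=
      { lt := by
          rintro m hm _ ⟨v, hv, rfl⟩
          exact h3.lt m hm v hv
        mem := by
          rintro m _ ⟨v, hv, rfl⟩
          exact h3.mem m v hv
        comm := by
          intro y
          obtain ⟨x, rfl⟩ := quoMk_surj hf y
          rw [← (quoMk_chain hf 0).comm, hl, hl, h3.comm] }
    exact ⟨nmk s' l (CS_le_CT c hlc), nv_inj rfl⟩

variable (hP hss hX E)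

/-- The sequence of stages. -/
def stages (S : Stage c X) : ℕ → Stage c X
  | 0 => S
  | n + 1 => (stages S n).next hP hss hX E

theorem range_step (S : Stage c X) (s : ℤ) {Y' : Type} [AddCommGroup Y'] [Module (BA c hP.pos X).A Y']
    (φ : (NG c hP.pos X S.cov.P s).M →ₗ[(BA c hP.pos X).A] Y')
    (hφ : ∀ g, φ g = 0 ↔ (preG hP.pos X S.cov.hf (s - S.t) s (by ring)).lin g = 0) :
    LinearMap.range (preL hP.pos X (S.q_chain hP hss hX E) s (s + 1)) = LinearMap.ker φ := by
  ext g
  rw [LinearMap.mem_ker, hφ, LinearMap.mem_range]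
  constructor
  · rintro ⟨g, rfl⟩
    refine nv_inj ?_
    ext x
    show nv g ((S.next hP hss hX E).cov.f (quoMk S.cov.hf (S.cov.f x))) = 0
    have h0 : quoMk S.cov.hf (S.cov.f x) = 0 := (quoMk_eq_zero S.cov.hf).2 ⟨x, rfl⟩
    exact (congrArg (fun z => nv g ((S.next hP hss hX E).cov.f z)) h0).trans
      ((congrArg (nv g) (map_zero _)).trans (map_zero _))
  · intro h
    obtain ⟨g', rfl⟩ := pre_ker hP.pos S.cov.hf _ _ _ h
    obtain ⟨ggg, rfl⟩ := pre_surj hP hss hX (S.next hP hss hX E) s (s + 1) rfl g'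
    exact ⟨ggg, rfl⟩

/-- The resolution over `B` of the module of chain maps. -/
def bRes (S : Stage c X) (hS : S.t = 0) : MinRes (NG c hP.pos X S.Y 0) where
  P n := NG c hP.pos X (stages hP hss hX E S n).cov.P n
  d n := preG hP.pos X ((stages hP hss hX E S n).q_chain hP hss hX E) n ((n + 1 : ℕ) : ℤ) (by simp)
  aug := preG hP.pos X S.cov.hf 0 ((0 : ℕ) : ℤ) (by simp [hS])
  fg n := NG_fg _ (stages hP hss hX E S n).cov.hi (stages hP hss hX E S n).cov.hs
    (stages hP hss hX E S n).cov.his _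
  projective n := NG_proj _ (stages hP hss hX E S n).cov.hi (stages hP hss hX E S n).cov.hs
    (stages hP hss hX E S n).cov.his _
  aug_surj := pre_surj hP hss hX S 0 _ _
  exact_aug := range_step hP hss hX E S 0 _ (fun g => by
    constructor
    · intro h
      exact nv_inj (congrArg nv h)
    · intro h
      exact nv_inj (congrArg nv h))
  exact n := by
    have := range_step hP hss hX E (stages hP hss hX E S (n + 1)) ((n + 1 : ℕ) : ℤ)
      (preL hP.pos X ((stages hP hss hX E S n).q_chain hP hss hX E) n ((n + 1 : ℕ) : ℤ)) (fun g => by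
        constructor
        · intro h
          have h2 := pre_mk_inj (X := X) hP.pos (stages hP hss hX E S n).cov.hf 0
            (g := preL hP.pos X (stages hP hss hX E S (n + 1)).cov.hf _ _ g)
            (nv_inj (congrArg nv h))
          exact nv_inj (congrArg nv h2)
        · intro h
          refine nv_inj ?_
          have h2 : nv g ∘ₗ _ = 0 := congrArg nv h
          ext x
          exact LinearMap.congr_fun h2 (quoMk (stages hP hss hX E S n).cov.hf x))
    exact this
  minimal n := by
    rintro _ ⟨g, rfl⟩
    exact preL_radical hP.pos (stages hP hss hX E S n).cov.hi (stages hP hss hX E S n).cov.hs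
      (stages hP hss hX E S n).cov.his ((stages hP hss hX E S n).q_chain hP hss hX E) _ _ _

theorem NG_koszul (hP : Per δ c D) (hss : IsSemisimpleRing (R0 𝒜)) {X : Cx 𝒜 δ}
    (hX : X.Ex 0) (E : X.V 0 ≃ₗ[R0 𝒜] R0 𝒜) (Y : Cx 𝒜 δ) (hY : Y.Ex 1) : (BA c hP.pos X).IsKoszulMod (NG c hP.pos X Y 0) := by
  obtain ⟨cov⟩ := exists_cover (c := c) hP hss hX E Y 0
  let S : Stage c X := ⟨Y, 0, hY, fun n hn => by omega, cov⟩
  exact ⟨bRes hP hss hX E S rfl, fun n =>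
    NG_gen _ (stages hP hss hX E S n).cov.hi (stages hP hss hX E S n).cov.hs
    (stages hP hss hX E S n).cov.his _⟩

end

end Cx
end BRes
end GradedAlg


namespace GradedAlg

section TrivCx

variable {F : Type} [Field F] {𝒜 : GradedAlg F}

namespace Cx
variable {δ : ℕ → ℕ} {c : ℕ}

/-- The submodules of generators of the complex `A` concentrated in position zero. -/
def cxTV (𝒜 : GradedAlg F) : ℕ → Submodule (R0 𝒜) 𝒜.A
  | 0 => Submodule.span (R0 𝒜) {1}
  | _ + 1 => ⊥

/-- The complex `A` concentrated in position zero. -/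
def cxT (𝒜 : GradedAlg F) (δ : ℕ → ℕ) : Cx 𝒜 δ where
  Y := 𝒜.A
  V := cxTV 𝒜
  fg n := by
    cases n with
    | zero => exact ⟨{1}, by simp [cxTV]⟩
    | succ n => exact Submodule.fg_bot
  span := by
    rw [eq_top_iff]
    intro a _
    have : (1 : 𝒜.A) ∈ Submodule.span 𝒜.A (⋃ n, (cxTV 𝒜 n : Set 𝒜.A)) :=
      Submodule.subset_span (Set.mem_iUnion.2 ⟨0, Submodule.subset_span rfl⟩)
    simpa using Submodule.smul_mem _ a this
  free Z _ _ u := by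
    refine ⟨LinearMap.toSpanSingleton 𝒜.A Z (u 0 ⟨1, Submodule.subset_span rfl⟩), fun n v => ?_⟩
    cases n with
    | zero =>
      obtain ⟨v, hv⟩ := v
      obtain ⟨r, rfl⟩ := Submodule.mem_span_singleton.1 hv
      have : (⟨r • (1 : 𝒜.A), hv⟩ : cxTV 𝒜 0) = r • ⟨1, Submodule.subset_span rfl⟩ := rfl
      rw [this, map_smul]
      simp [r0_smul]
    | succ n =>
      obtain ⟨v, hv⟩ := v
      obtain rfl : v = 0 := (Submodule.mem_bot _).1 hv
      have : (⟨0, hv⟩ : cxTV 𝒜 (n + 1)) = 0 := rfl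
      rw [this, map_zero]
      simp
  d := 0
  d0 _ _ := rfl
  dV _ _ _ := zero_mem _
  dd _ := rfl

theorem cxT_V (n : ℕ) (hn : n ≠ 0) {v : (cxT 𝒜 δ).Y} (hv : v ∈ (cxT 𝒜 δ).V n) : v = 0 := by
  obtain ⟨n, rfl⟩ := Nat.exists_eq_succ_of_ne_zero hn
  exact (Submodule.mem_bot _).1 hv

theorem cxT_V0 {v : (cxT 𝒜 δ).Y} (hv : v ∈ (cxT 𝒜 δ).V 0) : ∃ r : R0 𝒜, v = r • (1 : 𝒜.A) := by
  obtain ⟨r, hr⟩ := Submodule.mem_span_singleton.1 (show (show 𝒜.A from v) ∈ cxTV 𝒜 0 from hv)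
  exact ⟨r, hr.symm⟩

theorem cxT_one : (show (cxT 𝒜 δ).Y from (1 : 𝒜.A)) ∈ (cxT 𝒜 δ).V 0 :=
  show (1 : 𝒜.A) ∈ cxTV 𝒜 0 from Submodule.subset_span rfl

theorem cxT_ex : (cxT 𝒜 δ).Ex 1 := by
  intro n hn j _ x hx _
  refine ⟨0, zero_mem _, ?_⟩
  rw [map_zero]
  exact (Gd_kill (LinearMap.id : 𝒜.A →ₗ[𝒜.A] 𝒜.A) (fun v hv => cxT_V n (by omega) hv) hx).symm

section
variable {D : ℕ} {X : Cx 𝒜 δ}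

/-- The map `A → X` given by a generator. -/
def f0 (E : X.V 0 ≃ₗ[R0 𝒜] R0 𝒜) : Hm (cxT 𝒜 δ) X :=
  LinearMap.toSpanSingleton 𝒜.A X.Y (E.symm 1 : X.Y)

theorem f0_chain (c : ℕ) (E : X.V 0 ≃ₗ[R0 𝒜] R0 𝒜) : IsChain c 0 (cxT 𝒜 δ) X (f0 E) where
  lt n hn := by omega
  mem n v hv := by
    cases n with
    | zero =>
      obtain ⟨r, rfl⟩ := cxT_V0 hv
      show (r • (1 : 𝒜.A)) • (E.symm 1 : X.Y) ∈ _
      rw [smul_assoc, one_smul]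
      exact Submodule.smul_mem _ _ (E.symm 1).2
    | succ n =>
      rw [cxT_V (n + 1) (by omega) hv, map_zero]; exact zero_mem _
  comm y := by
    show (0 : 𝒜.A) • _ = X.d ((show 𝒜.A from y) • (E.symm 1 : X.Y))
    rw [map_smul, X.d0 _ (E.symm 1).2, zero_smul, smul_zero]

theorem T_high (hP : Per δ c D) (hX : X.Ex 0) {j : ℤ} (hj : j ≠ 0)
    {x : (NG c hP.pos X (cxT 𝒜 δ) 0).M} (hx : x ∈ (NG c hP.pos X (cxT 𝒜 δ) 0).grading j) : x = 0 := by
  rcases NG_cases hx with h1 | ⟨n, rfl, h1⟩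
  · exact h1.2
  · have hn : n ≠ 0 := by rintro rfl; simp at hj
    refine nv_inj ((chain_unique hP hX h1 fun v hv => ?_).trans (map_zero nv).symm)
    have := cxT_V _ (Nat.mul_ne_zero hP.pos.ne' hn) hv
    rw [this, map_zero]

theorem T_kill (hP : Per δ c D) (hX : X.Ex 0)
    {x : (NG c hP.pos X (cxT 𝒜 δ) 0).M} (hx : x ∈ (NG c hP.pos X (cxT 𝒜 δ) 0).grading 0)
    {b : (BA c hP.pos X).A} (hb : b ∈ (BA c hP.pos X).jideal) : b • x = 0 := by
  classical
  rw [mem_jideal_iff] at hb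
  rw [← DirectSum.sum_support_decompose (BA c hP.pos X).grading b, Finset.sum_smul]
  refine Finset.sum_eq_zero fun i _ => ?_
  rcases eq_or_ne i 0 with rfl | hi
  · rw [hb, zero_smul]
  · refine T_high hP hX (j := (i : ℤ) + 0) (by simpa using hi) (GMod.smul_mem _ (SetLike.coe_mem _) hx)

theorem cxT_trivial (hP : Per δ c D) (hX : X.Ex 0) (E : X.V 0 ≃ₗ[R0 𝒜] R0 𝒜) :
    IsTrivialGMod (NG c hP.pos X (cxT 𝒜 δ) 0) := by
  refine ⟨fun j hj => (Submodule.eq_bot_iff _).2 fun x hx => T_high hP hX hj hx, ?_⟩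
  let g0 : (NG c hP.pos X (cxT 𝒜 δ) 0).M := nmk 0 (f0 E) (CS_le_CT c (f0_chain c E))
  have hg0 : g0 ∈ (NG c hP.pos X (cxT 𝒜 δ) 0).grading 0 := (mem_NG (n := 0) (by simp)).2 (f0_chain c E)
  have hE : ∀ v : X.V 0, E v • (E.symm 1 : X.Y) = v := fun v => by
    have : E v • E.symm 1 = v := by rw [← map_smul, smul_eq_mul, mul_one, E.symm_apply_apply]
    exact congrArg Subtype.val this
  let β := LinearMap.toSpanSingleton (BA c hP.pos X).A _ g0
  have hs : Function.Surjective β := by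
    intro g
    rw [← LinearMap.mem_range]
    induction g using GMod.induction with
    | h0 => exact zero_mem _
    | ha x y hx hy => exact add_mem hx hy
    | hm j g hg =>
      rcases eq_or_ne j 0 with rfl | hj
      · have hgc : IsChain c 0 _ _ (nv g) := (mem_NG (n := 0) (by simp)).1 hg
        let y : X.Y := nv g (1 : 𝒜.A)
        have hy : y ∈ X.V 0 := hgc.mem 0 _ cxT_one
        obtain ⟨b, hb, hb'⟩ := chain_exists hP (Y := X) hX 0
          ((LinearMap.toSpanSingleton (R0 𝒜) X.Y y) ∘ₗ (E : X.V 0 →ₗ[R0 𝒜] R0 𝒜))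
          (fun v => Submodule.smul_mem _ _ hy)
        refine ⟨bmk hP.pos b (CS_le_CT c hb), nv_inj ?_⟩
        refine LinearMap.ext fun a => ?_
        show b ((show 𝒜.A from a) • (E.symm 1 : X.Y)) = nv g a
        rw [map_smul]
        have h2 := hb' (E.symm 1)
        have h3 : b (E.symm 1 : X.Y) = y := h2.trans (by
          show E (E.symm 1) • y = y
          rw [E.apply_symm_apply, one_smul])
        rw [h3]
        have := (nv g).map_smul a (1 : 𝒜.A)
        exact this.symm.trans (congrArg (nv g) (mul_one (show 𝒜.A from a)))
      · rw [T_high hP hX hj hg]; exact zero_mem _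
  have hk : LinearMap.ker β = (BA c hP.pos X).jideal := by
    ext b
    rw [LinearMap.mem_ker]
    constructor
    · intro hb
      have hb : b • g0 = 0 := hb
      rw [mem_jideal_iff]
      set b0 := ((DirectSum.decompose (BA c hP.pos X).grading b 0 : _) : (BA c hP.pos X).A) with hb0
      have h0m : b0 ∈ (BA c hP.pos X).grading 0 := SetLike.coe_mem _
      have h1 : (b - b0) • g0 = 0 := T_kill hP hX hg0 (by
        rw [mem_jideal_iff, DirectSum.decompose_sub, DirectSum.decompose_of_mem _ h0m]
        simp [hb0])
      rw [sub_smul, hb, zero_sub, neg_eq_zero] at h1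
      have h2 : bv b0 ∘ₗ f0 E = 0 := congrArg nv h1
      have h3 : bv b0 (E.symm 1 : X.Y) = 0 := by
        have := LinearMap.congr_fun h2 (1 : 𝒜.A)
        refine Eq.trans ?_ this
        show _ = bv b0 ((1 : 𝒜.A) • (E.symm 1 : X.Y))
        rw [one_smul]
      refine bv_inj ((chain_unique hP hX (bv_gr.1 h0m) fun v hv => ?_) : bv b0 = 0)
      have h4 := hE ⟨v, hv⟩
      have h5 : v = E ⟨v, hv⟩ • (E.symm 1 : X.Y) := h4.symm
      rw [h5, r0_smul, map_smul, h3, smul_zero]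
    · intro hb
      exact T_kill hP hX hg0 hb
  exact ⟨((Submodule.quotEquivOfEq _ _ hk).symm.trans (LinearMap.quotKerEquivOfSurjective β hs)).symm⟩

end
end Cx
end TrivCx
end GradedAlg


namespace GradedAlg

section GenDeg

variable {F : Type} [Field F] {𝒜 : GradedAlg F}

theorem A_ind {p : 𝒜.A → Prop} (h0 : p 0) (ha : ∀ x y, p x → p y → p (x + y))
    (hm : ∀ i, ∀ x ∈ 𝒜.grading i, p x) (x : 𝒜.A) : p x := by
  classical
  rw [← DirectSum.sum_support_decompose 𝒜.grading x]
  exact Finset.sum_induction _ p ha h0 fun i _ => hm i _ (SetLike.coe_mem _)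

namespace GMod
variable (P : 𝒜.GMod)

/-- The homogeneous component as a module over the degree zero part. -/
def gr0 (j : ℤ) : Submodule (R0 𝒜) P.M where
  carrier := P.grading j
  add_mem' := add_mem
  zero_mem' := zero_mem _
  smul_mem' a x hx := by
    have := P.smul_mem a.2 hx
    rw [Nat.cast_zero, zero_add] at this
    exact this

variable {P}

theorem mem_gr0 {j : ℤ} {x : P.M} : x ∈ P.gr0 j ↔ x ∈ P.grading j := Iff.rfl

theorem Gd_mem {s j : ℕ} {x : P.M} (hx : x ∈ Gd (P.gr0 s) s j) : x ∈ P.grading j := by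
  have : Gd (P.gr0 s) s j ≤ P.gr0 j := by
    refine Submodule.span_le.2 ?_
    rintro _ ⟨i, hi, a, ha, v, hv, rfl⟩
    have := P.smul_mem ha hv
    rw [show ((i : ℤ) + s) = (j : ℤ) by omega] at this
    exact this
  exact this hx

/-- Degree `j` part of the span of the degree `s` part. -/
def Qd (P : 𝒜.GMod) (s : ℕ) (j : ℤ) : AddSubgroup P.M :=
  if 0 ≤ j then (Gd (P.gr0 s) s j.toNat).toAddSubgroup else ⊥

theorem Qd_nat {s j : ℕ} {x : P.M} : x ∈ P.Qd s j ↔ x ∈ Gd (P.gr0 s) s j := by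
  simp [Qd]

theorem Qd_neg {s : ℕ} {j : ℤ} (h : j < 0) {x : P.M} : x ∈ P.Qd s j ↔ x = 0 := by
  rw [Qd, if_neg (not_le.2 h), AddSubgroup.mem_bot]

theorem Qd_smul {s i : ℕ} {j k : ℤ} (hk : (i : ℤ) + j = k) {a : 𝒜.A} (ha : a ∈ 𝒜.grading i) {x : P.M}
    (hx : x ∈ P.Qd s j) : a • x ∈ P.Qd s k := by
  rcases lt_or_ge j 0 with h | h
  · rw [(Qd_neg h).1 hx, smul_zero]; exact zero_mem _
  · lift j to ℕ using h
    rw [← hk, ← Nat.cast_add, Qd_nat]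
    exact Gd_smul ha (Qd_nat.1 hx)

theorem gen_Qd {s : ℕ} (h : P.GenInDeg s) (x : P.M) : ∀ j, P.proj j x ∈ P.Qd s j := by
  have hx : x ∈ Submodule.span 𝒜.A (P.grading s : Set P.M) := by rw [h]; trivial
  induction hx using Submodule.span_induction with
  | mem v hv =>
    intro j
    rcases eq_or_ne (s : ℤ) j with rfl | hj
    · rw [P.proj_same hv, Qd_nat, Gd_self]; exact hv
    · rw [P.proj_ne hv hj]; exact zero_mem _
  | zero => intro j; rw [map_zero]; exact zero_mem _
  | add x y _ _ hx hy => intro j; rw [map_add]; exact add_mem (hx j) (hy j)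
  | smul a x _ hx =>
    induction a using A_ind with
    | h0 => intro j; rw [zero_smul, map_zero]; exact zero_mem _
    | ha a b ha hb => intro j; rw [add_smul, map_add]; exact add_mem (ha j) (hb j)
    | hm i a ha =>
      intro j
      rw [P.proj_smul (i := i) (j := j - i) (k := j) (by ring) ha]
      exact Qd_smul (by ring) ha (hx _)

theorem gen_Gd {s j : ℕ} (h : P.GenInDeg s) {x : P.M} (hx : x ∈ P.grading j) :
    x ∈ Gd (P.gr0 s) s j := by
  rw [← Qd_nat, ← P.proj_same hx]; exact gen_Qd h x j

theorem gen_lt {s : ℕ} {j : ℤ} (h : P.GenInDeg s) (hj : j < s) {x : P.M} (hx : x ∈ P.grading j) : x = 0 := by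
  have h1 := gen_Qd h x j
  rw [P.proj_same hx] at h1
  rcases lt_or_ge j 0 with h2 | h2
  · exact (Qd_neg h2).1 h1
  · lift j to ℕ using h2
    exact Gd_lt (by omega) (Qd_nat.1 h1)

theorem proj_s_smul {s : ℕ} (h : P.GenInDeg s) (a : 𝒜.A) (x : P.M) :
    P.proj s (a • x) = (DirectSum.decompose 𝒜.grading a 0 : 𝒜.A) • P.proj s x := by
  induction a using A_ind with
  | h0 => simp
  | ha a b ha hb => rw [add_smul, map_add, ha, hb, DirectSum.decompose_add, ← add_smul]; rfl
  | hm i a ha =>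
    rcases eq_or_ne i 0 with rfl | hi
    · rw [DirectSum.decompose_of_mem_same _ ha, P.proj_smul (j := s) (by simp) ha]
    · rw [DirectSum.decompose_of_mem_ne _ ha hi, zero_smul, P.proj_smul (j := s - i) (by ring) ha,
        gen_lt h (j := (s : ℤ) - i) (by omega) (P.proj_mem _ x), smul_zero]

theorem proj_s_rad {s : ℕ} (h : P.GenInDeg s) {x : P.M}
    (hx : x ∈ 𝒜.jideal • (⊤ : Submodule 𝒜.A P.M)) : P.proj s x = 0 := by
  induction hx using Submodule.smul_induction_on' with
  | smul a ha y hy => rw [proj_s_smul h, mem_jideal_iff.1 ha, zero_smul]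
  | add x hx y hy h1 h2 => rw [map_add, h1, h2, add_zero]

theorem gr0_fg {s : ℕ} (h : P.GenInDeg s) (hfg : Module.Finite 𝒜.A P.M) : (P.gr0 s).FG := by
  classical
  obtain ⟨S, hS⟩ := hfg.fg_top
  refine ⟨S.image (P.proj s), le_antisymm ?_ fun v hv => ?_⟩
  · refine Submodule.span_le.2 fun x hx => ?_
    obtain ⟨y, -, rfl⟩ := Finset.mem_image.1 hx
    exact P.proj_mem s y
  · have h1 : ∀ x ∈ Submodule.span 𝒜.A (S : Set P.M),
        P.proj s x ∈ Submodule.span (R0 𝒜) (S.image (P.proj s) : Set P.M) := by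
      intro x hx
      induction hx using Submodule.span_induction with
      | mem x hx => exact Submodule.subset_span (Finset.mem_image_of_mem _ hx)
      | zero => rw [map_zero]; exact zero_mem _
      | add x y _ _ hx hy => rw [map_add]; exact add_mem hx hy
      | smul a x _ hx =>
        rw [proj_s_smul h]
        exact Submodule.smul_mem _ (DirectSum.decompose 𝒜.grading a 0 : R0 𝒜) hx
    have h2 := h1 v (by rw [hS]; trivial)
    rwa [P.proj_same hv] at h2

/-- Component in an integer degree. -/
def cpt (𝒜 : GradedAlg F) (k : ℤ) : 𝒜.A →ₗ[F] 𝒜.A :=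
  if 0 ≤ k then GradedAlgebra.proj 𝒜.grading k.toNat else 0

theorem cpt_zero (a : 𝒜.A) : cpt 𝒜 0 a = (DirectSum.decompose 𝒜.grading a 0 : 𝒜.A) := by
  simp [cpt, GradedAlgebra.proj_apply]

theorem cpt_same {i : ℕ} {a : 𝒜.A} (ha : a ∈ 𝒜.grading i) : cpt 𝒜 i a = a := by
  simp [cpt, GradedAlgebra.proj_apply, DirectSum.decompose_of_mem_same _ ha]

theorem cpt_ne {i : ℕ} {k : ℤ} (hk : (i : ℤ) ≠ k) {a : 𝒜.A} (ha : a ∈ 𝒜.grading i) : cpt 𝒜 k a = 0 := by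
  rw [cpt]
  split_ifs with h
  · lift k to ℕ using h
    rw [GradedAlgebra.proj_apply, Int.toNat_natCast, DirectSum.decompose_of_mem_ne _ ha (by simpa using hk)]
  · rfl

theorem cpt_mul {i : ℕ} {k l : ℤ} (hl : (i : ℤ) + k = l) {a : 𝒜.A} (ha : a ∈ 𝒜.grading i) (b : 𝒜.A) :
    cpt 𝒜 l (a * b) = a * cpt 𝒜 k b := by
  induction b using A_ind with
  | h0 => simp
  | ha x y hx hy => rw [mul_add, map_add, map_add, mul_add, hx, hy]
  | hm j b hb =>
    have h1 := SetLike.mul_mem_graded ha hb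
    rcases eq_or_ne (j : ℤ) k with rfl | hj
    · rw [cpt_same hb, ← hl, ← Nat.cast_add, cpt_same h1]
    · rw [cpt_ne hj hb, cpt_ne (by push_cast; omega) h1, mul_zero]

theorem exists_gr (P : 𝒜.GMod) (s : ℤ) (φ : P.M →ₗ[𝒜.A] 𝒜.A) : ∃ φ' : P.M →ₗ[𝒜.A] 𝒜.A,
    ∀ v ∈ P.grading s, φ' v = (DirectSum.decompose 𝒜.grading (φ v) 0 : 𝒜.A) := by
  let ψ : P.M →ₗ[F] 𝒜.A := DirectSum.toModule F ℤ 𝒜.A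
    (fun j => cpt 𝒜 (j - s) ∘ₗ φ.restrictScalars F ∘ₗ (P.grading j).subtype) ∘ₗ
      (DirectSum.decomposeLinearEquiv P.grading).toLinearMap
  have hψ : ∀ j, ∀ x ∈ P.grading j, ψ x = cpt 𝒜 (j - s) (φ x) := by
    intro j x hx
    show DirectSum.toModule F ℤ 𝒜.A _ (DirectSum.decompose P.grading x) = _
    rw [DirectSum.decompose_of_mem _ hx]
    exact DirectSum.toModule_lof F j _
  refine ⟨{ toFun := ψ, map_add' := ψ.map_add, map_smul' := fun a x => ?_ }, fun v hv => ?_⟩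
  · rw [RingHom.id_apply, smul_eq_mul]
    induction x using P.induction with
    | h0 => simp
    | ha x y hx hy => rw [smul_add, map_add, map_add, hx, hy, mul_add]
    | hm j x hx =>
      induction a using A_ind with
      | h0 => simp
      | ha a b ha hb => rw [add_smul, map_add, ha, hb, add_mul]
      | hm i a ha =>
        rw [hψ _ _ hx, hψ _ _ (P.smul_mem ha hx), map_smul, smul_eq_mul]
        exact cpt_mul (by ring) ha _
  · show ψ v = _
    rw [hψ _ _ hv, sub_self, cpt_zero]

theorem gen_span_of {s : ℕ} (h : P.GenInDeg s) {S : Set P.M} (hS : P.gr0 s ≤ Submodule.span (R0 𝒜) S) :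
    Submodule.span 𝒜.A S = ⊤ := by
  rw [eq_top_iff, ← h]
  refine Submodule.span_le.2 fun v hv => ?_
  have h1 : v ∈ Submodule.span (R0 𝒜) S := hS hv
  exact Submodule.span_le_restrictScalars (R0 𝒜) 𝒜.A S h1

theorem free_gen {s : ℕ} (h : P.GenInDeg s) (hfg : Module.Finite 𝒜.A P.M)
    (hpr : Module.Projective 𝒜.A P.M) (Z : Type) [AddCommGroup Z] [Module 𝒜.A Z]
    (u : P.gr0 s →ₗ[R0 𝒜] Z) : ∃ f : P.M →ₗ[𝒜.A] Z, ∀ v : P.gr0 s, f v = u v := by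
  classical
  obtain ⟨S, hS⟩ := gr0_fg h hfg
  have hSm : ∀ i : S, (i : P.M) ∈ P.gr0 s := fun i => hS ▸ Submodule.subset_span i.2
  let q : (S → 𝒜.A) →ₗ[𝒜.A] P.M := Fintype.linearCombination 𝒜.A (fun i : S => (i : P.M))
  have hq : Function.Surjective q := by
    rw [← LinearMap.range_eq_top, Fintype.range_linearCombination]
    refine gen_span_of h ?_
    have h5 : (Set.range fun i : S => (i : P.M)) = (S : Set P.M) := Subtype.range_coe
    rw [h5]
    exact hS.ge
  obtain ⟨σ, hσ⟩ := Module.projective_lifting_property q LinearMap.id hq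
  choose φ hφ using fun i : S => exists_gr P s (LinearMap.proj i ∘ₗ σ)
  refine ⟨∑ i : S, (LinearMap.toSpanSingleton 𝒜.A Z (u ⟨i, hSm i⟩)) ∘ₗ φ i, fun v => ?_⟩
  have h1 : (v : P.M) = ∑ i : S, (DirectSum.decompose 𝒜.grading (σ v i) 0 : R0 𝒜) • (i : P.M) := by
    have h2 := LinearMap.congr_fun hσ (v : P.M)
    rw [LinearMap.comp_apply, LinearMap.id_apply, Fintype.linearCombination_apply] at h2
    have h3 := congrArg (P.proj s) h2
    rw [P.proj_same v.2, map_sum] at h3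
    refine h3.symm.trans ?_
    refine Finset.sum_congr rfl fun i _ => ?_
    rw [proj_s_smul h, P.proj_same (hSm i)]; rfl
  have h4 : v = ∑ i : S, (DirectSum.decompose 𝒜.grading (σ v i) 0 : R0 𝒜) • ⟨i, hSm i⟩ := by
    apply Subtype.ext
    rw [AddSubmonoidClass.coe_finsetSum]
    exact h1
  conv_rhs => rw [h4, map_sum]
  rw [LinearMap.sum_apply]
  refine Finset.sum_congr rfl fun i _ => ?_
  rw [LinearMap.comp_apply, hφ i v v.2, map_smul]
  rfl

theorem bdd (hfg : Module.Finite 𝒜.A P.M) : ∃ b : ℤ, ∀ j < b, ∀ x ∈ P.grading j, x = 0 := by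
  classical
  obtain ⟨S, hS⟩ := hfg.fg_top
  have h1 : ∃ b : ℤ, ∀ x ∈ S, ∀ j < b, P.proj j x = 0 := by
    obtain ⟨b, hb⟩ := (S.biUnion fun x => (DirectSum.decompose P.grading x).support).bddBelow
    refine ⟨b, fun x hx j hj => ?_⟩
    by_contra hne
    have : j ∈ (S.biUnion fun x => (DirectSum.decompose P.grading x).support) := by
      refine Finset.mem_biUnion.2 ⟨x, hx, DFinsupp.mem_support_iff.2 fun h0 => hne ?_⟩
      exact congrArg Subtype.val h0
    exact absurd (hb this) (by omega)
  obtain ⟨b, hb⟩ := h1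
  refine ⟨b, fun j hj x hx => ?_⟩
  have h2 : ∀ x ∈ Submodule.span 𝒜.A (S : Set P.M), ∀ j < b, P.proj j x = 0 := by
    intro x hx
    induction hx using Submodule.span_induction with
    | mem x hx => exact hb x hx
    | zero => intro j _; exact map_zero _
    | add x y _ _ hx hy => intro j hj; rw [map_add, hx j hj, hy j hj, add_zero]
    | smul a x _ hx =>
      induction a using A_ind with
      | h0 => intro j _; rw [zero_smul, map_zero]
      | ha a b ha hb => intro j hj; rw [add_smul, map_add, ha j hj, hb j hj, add_zero]
      | hm i a ha =>
        intro j hj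
        rw [P.proj_smul (i := i) (j := j - i) (by ring) ha, hx _ (by omega), smul_zero]
  rw [← P.proj_same hx]
  exact h2 x (by rw [hS]; trivial) j hj

theorem nakayama (hfg : Module.Finite 𝒜.A P.M) {N : Submodule 𝒜.A P.M}
    (hN : ∀ j, ∀ x ∈ N, P.proj j x ∈ N)
    (h : N ⊔ 𝒜.jideal • (⊤ : Submodule 𝒜.A P.M) = ⊤) : N = ⊤ := by
  obtain ⟨b, hb⟩ := bdd hfg
  have key : ∀ n : ℕ, ∀ j < b + n, ∀ x ∈ P.grading j, x ∈ N := by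
    intro n
    induction n with
    | zero =>
      intro j hj x hx
      rw [hb j (by simpa using hj) x hx]; exact zero_mem _
    | succ n ih =>
      intro j hj x hx
      have hx' : x ∈ N ⊔ 𝒜.jideal • (⊤ : Submodule 𝒜.A P.M) := by rw [h]; trivial
      obtain ⟨y, hy, z, hz, rfl⟩ := Submodule.mem_sup.1 hx'
      rw [← P.proj_same hx, map_add]
      refine add_mem (hN j y hy) ?_
      clear hx hx'
      induction hz using Submodule.smul_induction_on' with
      | add x hx y hy h1 h2 => rw [map_add]; exact add_mem h1 h2
      | smul a ha w hw =>
        classical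
        rw [← DirectSum.sum_support_decompose 𝒜.grading a, Finset.sum_smul, map_sum]
        refine sum_mem fun i _ => ?_
        rcases eq_or_ne i 0 with rfl | hi
        · rw [mem_jideal_iff.1 ha, zero_smul, map_zero]; exact zero_mem _
        · rw [P.proj_smul (i := i) (j := j - i) (by ring) (SetLike.coe_mem _)]
          refine Submodule.smul_mem _ _ (ih (j - i) ?_ _ (P.proj_mem _ _))
          push_cast at hj
          omega
  rw [eq_top_iff]
  intro x _
  rw [← Submodule.mem_toAddSubgroup]
  refine P.mem_of_proj fun j => ?_
  exact key (j - b + 1).toNat j (by omega) _ (P.proj_mem j x)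

end GMod
end GenDeg
end GradedAlg


namespace GradedAlg

section Uniq

variable {F : Type} [Field F] {𝒜 : GradedAlg F}

theorem GHom.rangeProj {P Q : 𝒜.GMod} (f : GHom P Q) (j : ℤ) (x : Q.M) (hx : x ∈ LinearMap.range f.lin) :
    Q.proj j x ∈ LinearMap.range f.lin := by
  obtain ⟨y, rfl⟩ := hx
  exact ⟨P.proj j y, f.proj j y⟩

/-- A linear map sending the generating degree to the same degree is graded. -/
theorem grad_of_gen {P Q : 𝒜.GMod} {s : ℕ} (h : P.GenInDeg s) (w : P.M →ₗ[𝒜.A] Q.M)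
    (hw : ∀ v ∈ P.grading s, w v ∈ Q.grading s) (j : ℤ) (x : P.M) (hx : x ∈ P.grading j) :
    w x ∈ Q.grading j := by
  rcases lt_or_ge j s with hj | hj
  · rw [GMod.gen_lt h hj hx, map_zero]; exact zero_mem _
  · lift j to ℕ using (by omega)
    obtain ⟨i, rfl⟩ := Nat.exists_eq_add_of_le (show s ≤ j by omega)
    exact GMod.Gd_mem (Gd_map' (W := Q.gr0 s) w hw (GMod.gen_Gd h hx))

theorem uniq_step (hss : IsSemisimpleRing (R0 𝒜)) {P P' Q : 𝒜.GMod} (f : GHom P Q) (f' : GHom P' Q)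
    (hfg : Module.Finite 𝒜.A P.M) (hpr : Module.Projective 𝒜.A P.M)
    (hfg' : Module.Finite 𝒜.A P'.M) (hpr' : Module.Projective 𝒜.A P'.M)
    (hk : LinearMap.ker f.lin ≤ 𝒜.jideal • (⊤ : Submodule 𝒜.A P.M))
    (hk' : LinearMap.ker f'.lin ≤ 𝒜.jideal • (⊤ : Submodule 𝒜.A P'.M))
    (hr : LinearMap.range f.lin = LinearMap.range f'.lin) {s : ℕ} (hg : P'.GenInDeg s) :
    P.GenInDeg s ∧ ∃ w : GHom P' P, Function.Bijective w.lin ∧ ∀ x, f.lin (w.lin x) = f'.lin x := by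
  have hmem : ∀ v : P'.gr0 s, f'.lin v ∈ Submodule.map (f.lin.restrictScalars (R0 𝒜)) (P.gr0 s) := by
    intro v
    obtain ⟨x, hx, hx'⟩ := f.lift (f'.grad s v v.2) (by rw [hr]; exact ⟨v, rfl⟩)
    exact ⟨x, hx, hx'⟩
  let fs : P.gr0 s →ₗ[R0 𝒜] Submodule.map (f.lin.restrictScalars (R0 𝒜)) (P.gr0 s) :=
    (f.lin.restrictScalars (R0 𝒜)).submoduleMap (P.gr0 s)
  let gs : P'.gr0 s →ₗ[R0 𝒜] Submodule.map (f.lin.restrictScalars (R0 𝒜)) (P.gr0 s) :=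
    ((f'.lin.restrictScalars (R0 𝒜)) ∘ₗ (P'.gr0 s).subtype).codRestrict _ hmem
  obtain ⟨u, hu⟩ := IsSemisimpleModule.lifting_property (R := R0 𝒜) (M := P.gr0 s)
    (N := Submodule.map (f.lin.restrictScalars (R0 𝒜)) (P.gr0 s)) (P := P'.gr0 s) fs
    (LinearMap.submoduleMap_surjective (f.lin.restrictScalars (R0 𝒜)) (P.gr0 s)) gs
  have hu' : ∀ v, f.lin (u v) = f'.lin v := fun v =>
    congrArg Subtype.val (LinearMap.congr_fun hu v)
  obtain ⟨w, hw⟩ := GMod.free_gen hg hfg' hpr' P.M ((P.gr0 s).subtype ∘ₗ u)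
  have hws : ∀ v ∈ P'.grading s, w v ∈ P.grading s := fun v hv => by
    rw [hw ⟨v, hv⟩]; exact (u ⟨v, hv⟩).2
  let W : GHom P' P := ⟨w, grad_of_gen hg w hws⟩
  have hfw : f.lin ∘ₗ w = f'.lin := by
    refine LinearMap.ext_on hg fun v hv => ?_
    rw [LinearMap.comp_apply, hw ⟨v, hv⟩]
    exact hu' ⟨v, hv⟩
  have hsurj : LinearMap.range w = ⊤ := by
    refine GMod.nakayama hfg (fun j x hx => W.rangeProj j x hx) ?_
    rw [eq_top_iff]
    intro x _
    have : f.lin x ∈ LinearMap.range f'.lin := by rw [← hr]; exact ⟨x, rfl⟩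
    obtain ⟨y, hy⟩ := this
    refine Submodule.mem_sup.2 ⟨w y, ⟨y, rfl⟩, x - w y, hk ?_, by abel⟩
    rw [LinearMap.mem_ker, map_sub, sub_eq_zero, ← hy, ← hfw]; rfl
  have hgen : P.GenInDeg s := by
    rw [GMod.GenInDeg, eq_top_iff, ← hsurj, LinearMap.range_eq_map, ← hg, Submodule.map_span]
    refine Submodule.span_mono ?_
    rintro _ ⟨v, hv, rfl⟩
    exact hws v hv
  refine ⟨hgen, W, ⟨?_, LinearMap.range_eq_top.1 hsurj⟩, fun x => LinearMap.congr_fun hfw x⟩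
  have hinj : ∀ v ∈ P'.grading s, w v = 0 → v = 0 := by
    intro v hv h0
    have h1 : v ∈ LinearMap.ker f'.lin := by
      rw [LinearMap.mem_ker, ← hfw, LinearMap.comp_apply, h0, map_zero]
    rw [← P'.proj_same hv]
    exact GMod.proj_s_rad hg (hk' h1)
  let ws : P'.gr0 s →ₗ[R0 𝒜] P.gr0 s := (w.restrictScalars (R0 𝒜)).restrict (fun v hv => hws v hv)
  have hwsb : Function.Bijective ws := by
    constructor
    · intro x y hxy
      have h3 : w x = w y := congrArg Subtype.val hxy
      refine Subtype.ext (sub_eq_zero.1 (hinj _ (sub_mem x.2 y.2) ?_))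
      rw [map_sub, h3, sub_self]
    · intro x
      obtain ⟨y, hy, hy'⟩ := W.lift x.2 (by show _ ∈ LinearMap.range w; rw [hsurj]; trivial)
      exact ⟨⟨y, hy⟩, Subtype.ext hy'⟩
  let e := LinearEquiv.ofBijective ws hwsb
  obtain ⟨g, hg'⟩ := GMod.free_gen hgen hfg hpr P'.M ((P'.gr0 s).subtype ∘ₗ e.symm.toLinearMap)
  have hgw : g ∘ₗ w = LinearMap.id := by
    refine LinearMap.ext_on hg fun v hv => ?_
    rw [LinearMap.comp_apply]
    have h2 := hg' (e ⟨v, hv⟩)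
    refine Eq.trans h2 ?_
    show ((e.symm (e ⟨v, hv⟩) : P'.gr0 s) : P'.M) = v
    rw [e.symm_apply_apply]
  intro x y hxy
  have := congrArg g hxy
  exact (LinearMap.congr_fun hgw x).symm.trans (this.trans (LinearMap.congr_fun hgw y))

/-- Composition of graded maps. -/
def GHom.comp {P Q R : 𝒜.GMod} (g : GHom Q R) (f : GHom P Q) : GHom P R :=
  ⟨g.lin ∘ₗ f.lin, fun j x hx => g.grad j _ (f.grad j x hx)⟩

theorem uniq_res (hss : IsSemisimpleRing (R0 𝒜)) {M : 𝒜.GMod} (R R' : MinRes M) (δ : ℕ → ℕ)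
    (h : ∀ n, (R'.P n).GenInDeg (δ n : ℤ)) (n : ℕ) : (R.P n).GenInDeg (δ n : ℤ) ∧
      ∃ w : GHom (R'.P n) (R.P n), Function.Bijective w.lin ∧
        LinearMap.range (w.lin ∘ₗ (R'.d n).lin) = LinearMap.range (R.d n).lin := by
  have tr : ∀ {P P' Q : 𝒜.GMod} (w : GHom P' P) (hw : Function.Bijective w.lin) (f : GHom P Q)
      (f' : GHom P' Q) (hc : ∀ x, f.lin (w.lin x) = f'.lin x),
      Submodule.map w.lin (LinearMap.ker f'.lin) = LinearMap.ker f.lin := by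
    intro P P' Q w hw f f' hc
    ext x
    constructor
    · rintro ⟨y, hy, rfl⟩
      rw [LinearMap.mem_ker, hc]; exact hy
    · intro hx
      obtain ⟨y, rfl⟩ := hw.2 x
      exact ⟨y, by rw [SetLike.mem_coe, LinearMap.mem_ker, ← hc]; exact hx, rfl⟩
  induction n with
  | zero =>
    obtain ⟨h1, w, hw, hc⟩ := uniq_step hss R.aug R'.aug (R.fg 0) (R.projective 0) (R'.fg 0)
      (R'.projective 0) (R.exact_aug ▸ R.minimal 0) (R'.exact_aug ▸ R'.minimal 0)
      (by rw [LinearMap.range_eq_top.2 R.aug_surj, LinearMap.range_eq_top.2 R'.aug_surj]) (h 0)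
    refine ⟨h1, w, hw, ?_⟩
    rw [LinearMap.range_comp, R'.exact_aug, R.exact_aug, tr w hw _ _ hc]
  | succ n ih =>
    obtain ⟨-, w, hw, hr⟩ := ih
    have hker : LinearMap.ker (w.comp (R'.d n)).lin = LinearMap.ker (R'.d n).lin :=
      LinearMap.ker_comp_of_ker_eq_bot _ (LinearMap.ker_eq_bot.2 hw.1)
    obtain ⟨h1, w', hw', hc⟩ := uniq_step hss (R.d n) (w.comp (R'.d n)) (R.fg _) (R.projective _)
      (R'.fg _) (R'.projective _) (R.exact n ▸ R.minimal (n + 1))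
      (by rw [hker]; exact R'.exact n ▸ R'.minimal (n + 1)) hr.symm (h (n + 1))
    refine ⟨h1, w', hw', ?_⟩
    rw [LinearMap.range_comp, R'.exact, R.exact, ← tr w' hw' _ _ hc, hker]

end Uniq
end GradedAlg


namespace GradedAlg

section Total

variable {F : Type} [Field F] {𝒜 : GradedAlg F} {M : 𝒜.GMod}

open DirectSum

/-- The total module of a resolution. -/
abbrev Tot (R : MinRes M) : Type := ⨁ n, (R.P n).M

/-- Inclusion of a term. -/
def tin (R : MinRes M) (n : ℕ) : (R.P n).M →ₗ[𝒜.A] Tot R := DirectSum.lof 𝒜.A ℕ (fun n => (R.P n).M) n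

/-- Projection to a term. -/
def tpr (R : MinRes M) (n : ℕ) : Tot R →ₗ[𝒜.A] (R.P n).M :=
  DirectSum.component 𝒜.A ℕ (fun n => (R.P n).M) n

theorem tpr_tin (R : MinRes M) (n : ℕ) (x : (R.P n).M) : tpr R n (tin R n x) = x :=
  DirectSum.component.lof_self (M := fun n => (R.P n).M) 𝒜.A n x

theorem tpr_tin_ne (R : MinRes M) {m n : ℕ} (h : m ≠ n) (x : (R.P m).M) : tpr R n (tin R m x) = 0 := by
  exact DirectSum.of_eq_of_ne (β := fun n => (R.P n).M) m n x h.symm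

theorem tin_ext (R : MinRes M) {Z : Type} [AddCommGroup Z] [Module 𝒜.A Z] {f g : Tot R →ₗ[𝒜.A] Z}
    (h : ∀ n x, f (tin R n x) = g (tin R n x)) : f = g :=
  DirectSum.linearMap_ext 𝒜.A fun n => LinearMap.ext fun x => h n x

/-- Total differential, on a term. -/
def tdn (R : MinRes M) : ∀ n, (R.P n).M →ₗ[𝒜.A] Tot R
  | 0 => 0
  | n + 1 => tin R n ∘ₗ (R.d n).lin

/-- Total differential. -/
def td (R : MinRes M) : Tot R →ₗ[𝒜.A] Tot R := DirectSum.toModule 𝒜.A ℕ (Tot R) (tdn R)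

theorem td_tin (R : MinRes M) (n : ℕ) (x : (R.P n).M) : td R (tin R n x) = tdn R n x :=
  DirectSum.toModule_lof (M := fun n => (R.P n).M) (φ := tdn R) 𝒜.A n x

theorem d_d (R : MinRes M) (n : ℕ) (x : (R.P (n + 2)).M) : (R.d n).lin ((R.d (n + 1)).lin x) = 0 := by
  rw [← LinearMap.mem_ker, ← R.exact]; exact ⟨x, rfl⟩

theorem td_td (R : MinRes M) (x : Tot R) : td R (td R x) = 0 := by
  have : td R ∘ₗ td R = 0 := by
    refine tin_ext R fun n x => ?_
    rw [LinearMap.comp_apply, td_tin]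
    match n, x with
    | 0, x => rw [tdn, LinearMap.zero_apply, map_zero, LinearMap.zero_apply]
    | 1, x =>
      rw [tdn, LinearMap.comp_apply, td_tin, tdn, LinearMap.zero_apply, LinearMap.zero_apply]
    | n + 2, x =>
      rw [tdn, LinearMap.comp_apply, td_tin, tdn, LinearMap.comp_apply, d_d, map_zero,
        LinearMap.zero_apply]
  exact LinearMap.congr_fun this x

theorem tpr_td (R : MinRes M) (n : ℕ) (x : Tot R) : tpr R n (td R x) = (R.d n).lin (tpr R (n + 1) x) := by
  have : tpr R n ∘ₗ td R = (R.d n).lin ∘ₗ tpr R (n + 1) := by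
    refine tin_ext R fun m x => ?_
    rw [LinearMap.comp_apply, LinearMap.comp_apply, td_tin]
    cases m with
    | zero => rw [tpr_tin_ne R (by omega), tdn, LinearMap.zero_apply, map_zero, map_zero]
    | succ m =>
      rw [tdn, LinearMap.comp_apply]
      rcases eq_or_ne m n with rfl | h
      · rw [tpr_tin, tpr_tin]
      · rw [tpr_tin_ne R h, tpr_tin_ne R (by omega), map_zero]
  exact LinearMap.congr_fun this x

variable {δ : ℕ → ℕ}

/-- The total complex. -/
def cx (R : MinRes M) (hg : ∀ n, (R.P n).GenInDeg (δ n : ℤ)) : Cx 𝒜 δ where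
  Y := Tot R
  V n := ((R.P n).gr0 (δ n)).map ((tin R n).restrictScalars (R0 𝒜))
  fg n := (GMod.gr0_fg (hg n) (R.fg n)).map _
  span := by
    rw [eq_top_iff]
    have h1 : ∀ n x, tin R n x ∈ Submodule.span 𝒜.A (⋃ n,
        ((((R.P n).gr0 (δ n)).map ((tin R n).restrictScalars (R0 𝒜)) : Submodule (R0 𝒜) (Tot R)) : Set (Tot R))) := by
      intro n x
      have hx : x ∈ Submodule.span 𝒜.A ((R.P n).grading (δ n) : Set (R.P n).M) := by rw [hg n]; trivial
      induction hx using Submodule.span_induction with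
      | mem x hx => exact Submodule.subset_span (Set.mem_iUnion.2 ⟨n, x, hx, rfl⟩)
      | zero => rw [map_zero]; exact zero_mem _
      | add x y _ _ hx hy => rw [map_add]; exact add_mem hx hy
      | smul a x _ hx => rw [map_smul]; exact Submodule.smul_mem _ _ hx
    intro x _
    induction x using DirectSum.induction_on with
    | zero => exact zero_mem _
    | of n x => exact h1 n x
    | add x y hx hy => exact add_mem (hx trivial) (hy trivial)
  free Z _ _ u := by
    choose f hf using fun n => GMod.free_gen (hg n) (R.fg n) (R.projective n) Z
      (u n ∘ₗ ((tin R n).restrictScalars (R0 𝒜)).submoduleMap ((R.P n).gr0 (δ n)))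
    refine ⟨DirectSum.toModule 𝒜.A ℕ Z f, fun n v => ?_⟩
    obtain ⟨_, x, hx, rfl⟩ := v
    exact (DirectSum.toModule_lof (M := fun n => (R.P n).M) (φ := f) 𝒜.A n x).trans (hf n ⟨x, hx⟩)
  d := td R
  d0 := by
    rintro _ ⟨x, hx, rfl⟩
    exact td_tin R 0 x
  dV := by
    rintro n _ ⟨x, hx, rfl⟩
    have h1 := GMod.gen_Gd (hg n) ((R.d n).grad _ x hx)
    have h2 : td R (tin R (n + 1) x) = tin R n ((R.d n).lin x) := td_tin R (n + 1) x
    show td R (tin R (n + 1) x) ∈ _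
    rw [h2]
    rcases le_or_gt (δ n) (δ (n + 1)) with h | h
    · obtain ⟨i, hi⟩ := Nat.exists_eq_add_of_le h
      rw [hi] at h1 ⊢
      exact Gd_map' (W := ((R.P n).gr0 (δ n)).map ((tin R n).restrictScalars (R0 𝒜))) (tin R n)
        (fun v hv => ⟨v, hv, rfl⟩) h1
    · rw [Gd_lt h h1, map_zero]; exact zero_mem _
  dd := td_td R

section
variable (R : MinRes M) (hg : ∀ n, (R.P n).GenInDeg (δ n : ℤ))

/-- Inclusion. -/
def ci (n : ℕ) : (R.P n).M →ₗ[𝒜.A] (cx R hg).Y := tin R n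
/-- Projection. -/
def cp (n : ℕ) : (cx R hg).Y →ₗ[𝒜.A] (R.P n).M := tpr R n

theorem cp_ci (n : ℕ) (x) : cp R hg n (ci R hg n x) = x := tpr_tin R n x

theorem cx_d (n : ℕ) (x) : (cx R hg).d (ci R hg (n + 1) x) = ci R hg n ((R.d n).lin x) := td_tin R (n + 1) x
theorem cp_d (n : ℕ) (x) : cp R hg n ((cx R hg).d x) = (R.d n).lin (cp R hg (n + 1) x) := tpr_td R n x

theorem ci_V {n : ℕ} {x} (hx : x ∈ (R.P n).grading (δ n)) : ci R hg n x ∈ (cx R hg).V n := ⟨x, hx, rfl⟩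

theorem V_cases {n : ℕ} {v} (hv : v ∈ (cx R hg).V n) : ∃ x ∈ (R.P n).grading (δ n), v = ci R hg n x := by
  obtain ⟨x, hx, rfl⟩ := hv
  exact ⟨x, hx, rfl⟩

theorem cp_V {n : ℕ} {v} (hv : v ∈ (cx R hg).V n) :
    cp R hg n v ∈ (R.P n).grading (δ n) ∧ ci R hg n (cp R hg n v) = v := by
  obtain ⟨x, hx, rfl⟩ := V_cases R hg hv
  rw [cp_ci]; exact ⟨hx, rfl⟩

theorem G_cases {n j : ℕ} {v} (hv : v ∈ (cx R hg).G n j) : ∃ x ∈ (R.P n).grading j, v = ci R hg n x := by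
  obtain ⟨y, hy, h⟩ := Gd_lift (V := (R.P n).gr0 (δ n)) (ci R hg n)
    (fun w hw => by obtain ⟨x, hx, rfl⟩ := V_cases R hg hw; exact ⟨x, hx, rfl⟩) hv
  exact ⟨y, GMod.Gd_mem hy, h.symm⟩

theorem ci_G {n j : ℕ} {x} (hx : x ∈ (R.P n).grading j) : ci R hg n x ∈ (cx R hg).G n j := by
  have h1 := GMod.gen_Gd (hg n) hx
  rcases le_or_gt (δ n) j with h | h
  · obtain ⟨i, rfl⟩ := Nat.exists_eq_add_of_le h
    exact Gd_map' (ci R hg n) (fun v hv => ci_V R hg hv) h1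
  · rw [Gd_lt h h1, map_zero]; exact zero_mem _

theorem ci_inj {n : ℕ} {x} (h : ci R hg n x = 0) : x = 0 := by
  rw [← cp_ci R hg n x, h, map_zero]

theorem cx_ex1 : (cx R hg).Ex 1 := by
  intro n hn j _ v hv hd
  obtain ⟨n, rfl⟩ := Nat.exists_eq_add_of_le' hn
  obtain ⟨x, hx, rfl⟩ := G_cases R hg hv
  rw [cx_d] at hd
  have h1 : x ∈ LinearMap.range (R.d (n + 1)).lin := by
    rw [R.exact]; exact ci_inj R hg hd
  obtain ⟨y, hy, rfl⟩ := (R.d (n + 1)).lift hx h1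
  exact ⟨_, ci_G R hg hy, cx_d R hg _ _⟩

theorem cx_ex0 (hM : ∀ j : ℤ, j ≠ 0 → M.grading j = ⊥) (hδ : δ 0 = 0) : (cx R hg).Ex 0 := by
  intro n _ j hj v hv hd
  rcases Nat.eq_zero_or_pos n with rfl | hn
  · obtain ⟨x, hx, rfl⟩ := G_cases R hg hv
    have h1 : x ∈ LinearMap.range (R.d 0).lin := by
      rw [R.exact_aug, LinearMap.mem_ker]
      have h2 := R.aug.grad _ _ hx
      have h3 := hj rfl
      rw [hM j (by omega)] at h2
      exact (Submodule.mem_bot _).1 h2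
    obtain ⟨y, hy, rfl⟩ := (R.d 0).lift hx h1
    exact ⟨_, ci_G R hg hy, cx_d R hg _ _⟩
  · exact cx_ex1 R hg n hn j hj v hv hd

end

end Total

section Triv

variable {F : Type} [Field F] {𝒜 : GradedAlg F} {T : 𝒜.GMod}

theorem triv_mem (h : ∀ j : ℤ, j ≠ 0 → T.grading j = ⊥) (t : T.M) : t ∈ T.grading 0 := by
  rw [← Submodule.mem_toAddSubgroup]
  refine T.mem_of_proj fun j => ?_
  rcases eq_or_ne j 0 with rfl | hj
  · exact T.proj_mem 0 t
  · have := T.proj_mem j t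
    rw [h j hj] at this
    rw [(Submodule.mem_bot _).1 this]; exact zero_mem _

theorem triv_kill (h : ∀ j : ℤ, j ≠ 0 → T.grading j = ⊥) {a : 𝒜.A} (ha : a ∈ 𝒜.jideal) (t : T.M) :
    a • t = 0 := by
  classical
  rw [mem_jideal_iff] at ha
  rw [← DirectSum.sum_support_decompose 𝒜.grading a, Finset.sum_smul]
  refine Finset.sum_eq_zero fun i _ => ?_
  rcases eq_or_ne i 0 with rfl | hi
  · rw [ha, zero_smul]
  · have h1 := T.smul_mem (SetLike.coe_mem (DirectSum.decompose 𝒜.grading a i)) (triv_mem h t)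
    rw [h _ (by simpa using hi)] at h1
    exact (Submodule.mem_bot _).1 h1

theorem triv_rad (h : ∀ j : ℤ, j ≠ 0 → T.grading j = ⊥) {P : Type} [AddCommGroup P] [Module 𝒜.A P]
    (f : P →ₗ[𝒜.A] T.M) {x : P} (hx : x ∈ 𝒜.jideal • (⊤ : Submodule 𝒜.A P)) : f x = 0 := by
  induction hx using Submodule.smul_induction_on' with
  | smul a ha y hy => rw [map_smul, triv_kill h ha]
  | add x hx y hy h1 h2 => rw [map_add, h1, h2, add_zero]

/-- The quotient `A/J` is the degree zero part. -/
theorem quot_equiv (𝒜 : GradedAlg F) : Nonempty ((𝒜.A ⧸ 𝒜.jideal) ≃ₗ[R0 𝒜] R0 𝒜) := by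
  let f : R0 𝒜 →ₗ[R0 𝒜] (𝒜.A ⧸ 𝒜.jideal) :=
    { toFun := fun a => Submodule.Quotient.mk (a : 𝒜.A)
      map_add' := fun a b => rfl
      map_smul' := fun a b => rfl }
  refine ⟨(LinearEquiv.ofBijective f ⟨?_, ?_⟩).symm⟩
  · intro a b hab
    have h1 : (a : 𝒜.A) - b ∈ 𝒜.jideal := (Submodule.Quotient.eq _).1 hab
    rw [mem_jideal_iff, DirectSum.decompose_of_mem_same _ (sub_mem a.2 b.2), sub_eq_zero] at h1
    exact Subtype.ext h1
  · intro x
    obtain ⟨a, rfl⟩ := Submodule.Quotient.mk_surjective _ x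
    refine ⟨DirectSum.decompose 𝒜.grading a 0, ?_⟩
    refine (Submodule.Quotient.eq _).2 ?_
    rw [mem_jideal_iff, DirectSum.decompose_sub, DirectSum.decompose_coe]
    simp

/-- The generators of the zeroth term are the trivial module. -/
theorem V0_equiv {δ : ℕ → ℕ} (R : MinRes T) (hg : ∀ n, (R.P n).GenInDeg (δ n : ℤ)) (hδ : δ 0 = 0)
    (h : ∀ j : ℤ, j ≠ 0 → T.grading j = ⊥) :
    ∃ e : (cx R hg).V 0 ≃ₗ[R0 𝒜] T.M, ∀ v, e v = R.aug.lin (cp R hg 0 v) := by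
  let f : (cx R hg).V 0 →ₗ[R0 𝒜] T.M :=
    ((R.aug.lin ∘ₗ cp R hg 0).restrictScalars (R0 𝒜)) ∘ₗ ((cx R hg).V 0).subtype
  refine ⟨LinearEquiv.ofBijective f ⟨?_, ?_⟩, fun v => rfl⟩
  · intro x y hxy
    have hxy : R.aug.lin (cp R hg 0 x) = R.aug.lin (cp R hg 0 y) := hxy
    have h1 := cp_V R hg x.2
    have h2 := cp_V R hg y.2
    have h3 : cp R hg 0 x - cp R hg 0 y ∈ LinearMap.ker R.aug.lin := by
      rw [LinearMap.mem_ker, map_sub, hxy, sub_self]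
    rw [← R.exact_aug] at h3
    have h4 := GMod.proj_s_rad (hg 0) (R.minimal 0 h3)
    rw [GMod.proj_same _ (sub_mem h1.1 h2.1), sub_eq_zero] at h4
    exact Subtype.ext (by rw [← h1.2, ← h2.2, h4])
  · intro t
    obtain ⟨x, hx, rfl⟩ := R.aug.lift (triv_mem h t) (LinearMap.range_eq_top.2 R.aug_surj ▸ trivial)
    refine ⟨⟨ci R hg 0 x, ci_V R hg (by rw [hδ]; exact hx)⟩, ?_⟩
    show R.aug.lin (cp R hg 0 (ci R hg 0 x)) = _
    rw [cp_ci]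

theorem V0_R0 {δ : ℕ → ℕ} (R : MinRes T) (hg : ∀ n, (R.P n).GenInDeg (δ n : ℤ)) (hδ : δ 0 = 0)
    (hT : IsTrivialGMod T) : Nonempty ((cx R hg).V 0 ≃ₗ[R0 𝒜] R0 𝒜) := by
  obtain ⟨e, -⟩ := V0_equiv R hg hδ hT.1
  obtain ⟨e'⟩ := quot_equiv 𝒜
  obtain ⟨e''⟩ := hT.2
  exact ⟨(e.trans (e''.restrictScalars (R0 𝒜))).trans e'⟩

end Triv
end GradedAlg


namespace GradedAlg

section ExtId

variable {F : Type} [Field F] {𝒜 : GradedAlg F} {T M : 𝒜.GMod}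

theorem mem_cocyc (hT : ∀ j : ℤ, j ≠ 0 → T.grading j = ⊥) (R : MinRes M) (n : ℕ) (f : HomSp T R n) :
    f ∈ cocyc T R n := by
  refine LinearMap.ext fun x => ?_
  exact triv_rad hT f (R.minimal n ⟨x, rfl⟩)

theorem extRel_bot (hT : ∀ j : ℤ, j ≠ 0 → T.grading j = ⊥) (R : MinRes M) (n : ℕ)
    (f : cocyc T R n) (hf : f ∈ extRel T R n) : f = 0 := by
  have hf : (f : HomSp T R n) ∈ cobound T R n := hf
  apply Subtype.ext
  cases n with
  | zero => exact (Submodule.mem_bot _).1 hf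
  | succ n =>
    obtain ⟨g, hg⟩ := hf
    rw [← hg]
    refine LinearMap.ext fun x => ?_
    exact triv_rad hT g (R.minimal n ⟨x, rfl⟩)

/-- Cochains are the same as Ext classes. -/
def homExt (hT : ∀ j : ℤ, j ≠ 0 → T.grading j = ⊥) (R : MinRes M) (n : ℕ) :
    HomSp T R n ≃ₗ[F] ExtQ T R n :=
  LinearEquiv.ofBijective
    ((extRel T R n).mkQ ∘ₗ LinearMap.codRestrict (cocyc T R n) LinearMap.id (mem_cocyc hT R n)) (by
      constructor
      · intro f g hfg
        have h1 := (Submodule.Quotient.eq _).1 hfg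
        have h2 := extRel_bot hT R n _ h1
        exact sub_eq_zero.1 (congrArg Subtype.val h2)
      · intro x
        obtain ⟨f, rfl⟩ := Submodule.Quotient.mk_surjective _ x
        exact ⟨f, rfl⟩)

theorem homExt_apply (hT : ∀ j : ℤ, j ≠ 0 → T.grading j = ⊥) (R : MinRes M) (n : ℕ) (f : HomSp T R n) :
    homExt hT R n f = extCls T (mem_cocyc hT R n f) := rfl

variable {δ : ℕ → ℕ} (RT : MinRes T) (RM : MinRes M) (gT : ∀ n, (RT.P n).GenInDeg (δ n : ℤ))
  (gM : ∀ n, (RM.P n).GenInDeg (δ n : ℤ))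

/-- The cochain of a chain map. -/
def kap (a : ℕ) (g : Cx.Hm (cx RM gM) (cx RT gT)) : HomSp T RM a :=
  RT.aug.lin ∘ₗ cp RT gT 0 ∘ₗ g ∘ₗ ci RM gM a

theorem kap_apply (a : ℕ) (g : Cx.Hm (cx RM gM) (cx RT gT)) (x) :
    kap RT RM gT gM a g x = RT.aug.lin (cp RT gT 0 (g (ci RM gM a x))) := rfl

/-- The cochain of a chain map, linear version. -/
def kapL (a : ℕ) : Cx.Hm (cx RM gM) (cx RT gT) →ₗ[F] HomSp T RM a where
  toFun := kap RT RM gT gM a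
  map_add' f g := by
    ext x
    rw [LinearMap.add_apply, kap_apply, kap_apply, kap_apply, LinearMap.add_apply, map_add, map_add]
  map_smul' r f := by
    ext x
    rw [LinearMap.smul_apply, kap_apply, kap_apply, LinearMap.smul_apply, Cx.F_smul, map_smul, map_smul,
      algebraMap_smul, RingHom.id_apply]

theorem extCast_homExt (hT : ∀ j : ℤ, j ≠ 0 → T.grading j = ⊥) {a b : ℕ} (h : a = b)
    (g : Cx.Hm (cx RM gM) (cx RT gT)) :
    extCast T RM h (homExt hT RM a (kap RT RM gT gM a g)) = homExt hT RM b (kap RT RM gT gM b g) := by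
  subst h; rfl

variable {c D : ℕ}

/-- Chain maps are determined by their cochain. -/
theorem kap_bij (hP : Cx.Per δ c D) (hT : ∀ j : ℤ, j ≠ 0 → T.grading j = ⊥) (n : ℕ) :
    Function.Bijective (kapL RT RM gT gM (c * n) ∘ₗ (Cx.CS c (cx RM gM) (cx RT gT) n).subtype) := by
  have hX := cx_ex0 RT gT hT hP.zero
  obtain ⟨e, he⟩ := V0_equiv RT gT hP.zero hT
  constructor
  · intro f g hfg
    have hfg : kap RT RM gT gM (c * n) f = kap RT RM gT gM (c * n) g := hfg
    refine Subtype.ext (Cx.chain_ext hP hX f.2 g.2 fun v hv => ?_)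
    have hv' : v ∈ (cx RM gM).V (0 + c * n) := by rwa [zero_add]
    have h1 := f.2.mem 0 v hv'
    have h2 := g.2.mem 0 v hv'
    obtain ⟨x, hx, rfl⟩ := V_cases RM gM hv
    have h3 := LinearMap.congr_fun hfg x
    rw [kap_apply, kap_apply] at h3
    have h4 : e ⟨_, h1⟩ = e ⟨_, h2⟩ := by rw [he, he]; exact h3
    exact congrArg Subtype.val (e.injective h4)
  · intro h
    obtain ⟨f, hf, hf'⟩ := Cx.chain_exists hP (Y := cx RM gM) hX n
      (((cx RT gT).V 0).subtype ∘ₗ e.symm.toLinearMap ∘ₗ (h ∘ₗ cp RM gM (c * n)).restrictScalars (R0 𝒜) ∘ₗ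
        ((cx RM gM).V (c * n)).subtype) (fun v => Subtype.coe_prop _)
    refine ⟨⟨f, hf⟩, ?_⟩
    refine LinearMap.ext_on (gM (c * n)) fun x hx => ?_
    show kap RT RM gT gM (c * n) f x = h x
    rw [kap_apply]
    have h1 := hf' ⟨_, ci_V RM gM hx⟩
    rw [h1]
    show RT.aug.lin (cp RT gT 0 (e.symm (h (cp RM gM (c * n) (ci RM gM (c * n) x))))) = h x
    rw [← he, e.apply_symm_apply, cp_ci]

/-- Chain maps of a given degree are Ext classes. -/
def csExt (hP : Cx.Per δ c D) (hT : ∀ j : ℤ, j ≠ 0 → T.grading j = ⊥) (n : ℕ) :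
    Cx.CS c (cx RM gM) (cx RT gT) n ≃ₗ[F] ExtQ T RM (c * n) :=
  (LinearEquiv.ofBijective _ (kap_bij RT RM gT gM hP hT n)).trans (homExt hT RM (c * n))

theorem csExt_apply (hP : Cx.Per δ c D) (hT : ∀ j : ℤ, j ≠ 0 → T.grading j = ⊥) (n : ℕ)
    (f : Cx.CS c (cx RM gM) (cx RT gT) n) :
    csExt RT RM gT gM hP hT n f = homExt hT RM (c * n) (kap RT RM gT gM (c * n) f) := rfl

/-- A chain map is homogeneous. -/
theorem chain_homog {n : ℕ} {g : Cx.Hm (cx RM gM) (cx RT gT)}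
    (hg : Cx.IsChain c n (cx RM gM) (cx RT gT) g) (a : ℕ) (x : (RM.P (a + c * n)).M) :
    ci RT gT a (cp RT gT a (g (ci RM gM (a + c * n) x))) = g (ci RM gM (a + c * n) x) := by
  have : ci RT gT a ∘ₗ cp RT gT a ∘ₗ g ∘ₗ ci RM gM (a + c * n) = g ∘ₗ ci RM gM (a + c * n) := by
    refine LinearMap.ext_on (gM _) fun x hx => ?_
    exact (cp_V RT gT (hg.mem a _ (ci_V RM gM hx))).2
  exact LinearMap.congr_fun this x

/-- The chain lift given by a chain map. -/
def chLift {n : ℕ} {g : Cx.Hm (cx RM gM) (cx RT gT)}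
    (hg : Cx.IsChain c n (cx RM gM) (cx RT gT) g) (b : ℕ) : ChainLift T RT RM b (kap RT RM gT gM b g) where
  ℓ m k _ := cp RT gT k ∘ₗ g ∘ₗ ci RM gM m
  comm_aug := rfl
  comm k := by
    refine LinearMap.ext fun x => ?_
    show (RT.d k).lin (cp RT gT (k + 1) (g (ci RM gM (k + b + 1) x))) =
      cp RT gT k (g (ci RM gM (k + b) ((RM.d (k + b)).lin x)))
    rw [← cx_d, hg.comm, cp_d]

theorem yoneda (hT : ∀ j : ℤ, j ≠ 0 → T.grading j = ⊥)
    {μ : ∀ i j : ℕ, ExtQ T RT i →ₗ[F] ExtQ T RM j →ₗ[F] ExtQ T RM (i + j)}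
    (hμ : IsYonedaMul T RT RM μ) {m n : ℕ} {g : Cx.Hm (cx RM gM) (cx RT gT)}
    {f : Cx.Hm (cx RT gT) (cx RT gT)}
    (hf : Cx.IsChain c m (cx RT gT) (cx RT gT) f)
    (hg : Cx.IsChain c n (cx RM gM) (cx RT gT) g) (h : c * m + c * n = c * (m + n)) :
    homExt hT RM (c * (m + n)) (kap RT RM gT gM _ (f ∘ₗ g)) =
      extCast T RM h (μ (c * m) (c * n) (homExt hT RT (c * m) (kap RT RT gT gT _ f))
        (homExt hT RM (c * n) (kap RT RM gT gM _ g))) := by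
  have h1 := hμ (c * m) (c * n) _ (mem_cocyc hT RT _ (kap RT RT gT gT (c * m) f)) _
    (mem_cocyc hT RM _ (kap RT RM gT gM (c * n) g)) (chLift RT RM gT gM hg (c * n)) (mem_cocyc hT RM _ _)
  rw [homExt_apply, homExt_apply, homExt_apply, h1]
  rw [← homExt_apply hT, ← homExt_apply hT, ← extCast_homExt RT RM gT gM hT h]
  congr 2
  refine LinearMap.ext fun x => ?_
  show RT.aug.lin (cp RT gT 0 (f (g (ci RM gM (c * m + c * n) x)))) =
    RT.aug.lin (cp RT gT 0 (f (ci RT gT (c * m) (cp RT gT (c * m) (g (ci RM gM (c * m + c * n) x))))))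
  rw [chain_homog RT RM gT gM hg]

/-- Degree components of the algebra are chain maps. -/
def bCS (hc : 0 < c) (X : Cx 𝒜 δ) (n : ℕ) : (Cx.BA c hc X).grading n ≃ₗ[F] Cx.CS c X X n where
  toFun b := ⟨Cx.bv (b : (Cx.BA c hc X).A), b.2⟩
  invFun f := ⟨Cx.bmk hc f.1 (Cx.CS_le_CT c f.2), f.2⟩
  map_add' _ _ := rfl
  map_smul' _ _ := rfl
  left_inv _ := rfl
  right_inv _ := rfl

/-- Degree components of the module are chain maps. -/
def nCS (hc : 0 < c) (X Y : Cx 𝒜 δ) (n : ℕ) : (Cx.NG c hc X Y 0).grading (n : ℤ) ≃ₗ[F] Cx.CS c Y X n where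
  toFun b := ⟨Cx.nv (b : (Cx.NG c hc X Y 0).M), (Cx.mem_NG (by simp)).1 b.2⟩
  invFun f := ⟨Cx.nmk 0 f.1 (Cx.CS_le_CT c f.2), (Cx.mem_NG (by simp)).2 f.2⟩
  map_add' _ _ := rfl
  map_smul' _ _ := rfl
  left_inv _ := rfl
  right_inv _ := rfl

end ExtId

section Jump

theorem jump_eq (d p n : ℕ) : jump d p n = n / p * d + n % p := by
  rw [jump]
  rcases Nat.eq_zero_or_pos p with rfl | hp
  · simp
  · congr 2
    have h1 := Nat.div_add_mod n p
    rw [show n - n % p = p * (n / p) by omega, Nat.mul_div_cancel_left _ hp]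

theorem jump_per (d p k : ℕ) (hp : 2 ≤ p) (hpd : p ≤ d) (hk : 1 ≤ k) :
    Cx.Per (jump d p) (p * k) (k * d) where
  mono := by
    refine strictMono_nat_of_lt_succ fun n => ?_
    rw [jump_eq, jump_eq, Nat.succ_div]
    have h1 := Nat.mod_lt n (show 0 < p by omega)
    have h3 := Nat.add_mod n 1 p
    rw [Nat.mod_eq_of_lt (show 1 < p by omega)] at h3
    split_ifs with h
    · have h2 : (n + 1) % p = 0 := Nat.mod_eq_zero_of_dvd h
      rw [h2, add_mul, one_mul]
      omega
    · rcases Nat.lt_or_ge (n % p + 1) p with h4 | h4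
      · rw [Nat.mod_eq_of_lt h4] at h3
        rw [add_zero]
        omega
      · have h5 : n % p + 1 = p := by omega
        rw [h5, Nat.mod_self] at h3
        exact absurd (Nat.dvd_of_mod_eq_zero h3) h
  zero := by simp [jump]
  per n := by
    rw [jump_eq, jump_eq, Nat.add_mul_mod_self_left, Nat.add_mul_div_left _ _ (by omega), add_mul]
    omega
  pos := Nat.mul_pos (by omega) hk

end Jump
end GradedAlg


open GradedAlg in
/-- **Remark to Theorem 2.8.** Let `A` be piecewise-Koszul with period `p` and jump
degree `d`, and let `M` be a piecewise-Koszul module generated in degree `0`.  Then for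
every `k ≥ 1`: (1) `𝓔_k(M) = ⊕_{n≥0} Ext^{pkn}_A(M,A_0)` is a Koszul module over
`𝓔_k(A)`; and (2) `𝓔_k(A) = ⊕_{n≥0} Ext^{pkn}_A(A_0,A_0)` is a Koszul algebra.
These are witnessed by a graded algebra `B` and a graded `B`-module `N` whose
components correspond to the Ext groups and whose multiplication/action corresponds to
the Yoneda product/action. -/
theorem ext_subalgebra_and_submodule_isKoszul
    {F : Type} [Field F] (𝒜 : GradedAlg F) (hA : 𝒜.Standing)
    (p d : ℕ) (hp : 2 ≤ p) (hpd : p ≤ d)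
    (T : 𝒜.GMod) (hT : IsTrivialGMod T) (hpk : 𝒜.IsPKAlg p d T)
    (M : 𝒜.GMod) (hfg : Module.Finite 𝒜.A M.M)
    (hM0 : M.GenInDeg (0 : ℤ)) (hMpk : 𝒜.IsPKMod p d 0 M)
    (RT : MinRes T) (RM : MinRes M)
    (μA : ∀ i j : ℕ, ExtQ T RT i →ₗ[F] ExtQ T RT j →ₗ[F] ExtQ T RT (i + j))
    (hμA : IsYonedaMul T RT RT μA)
    (μM : ∀ i j : ℕ, ExtQ T RT i →ₗ[F] ExtQ T RM j →ₗ[F] ExtQ T RM (i + j))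
    (hμM : IsYonedaMul T RT RM μM)
    (k : ℕ) (hk : 1 ≤ k) :
    ∃ (B : GradedAlg F) (φ : ∀ n : ℕ, ↥(B.grading n) ≃ₗ[F] ExtQ T RT (p * k * n))
      (N : B.GMod) (ψ : ∀ n : ℕ, ↥(N.grading (n : ℤ)) ≃ₗ[F] ExtQ T RM (p * k * n)),
      (∀ (m n : ℕ) (x : ↥(B.grading m)) (y : ↥(B.grading n)),
        φ (m + n) ⟨(x : B.A) * (y : B.A), SetLike.mul_mem_graded x.2 y.2⟩ =
          extCast T RT (by ring) (μA (p * k * m) (p * k * n) (φ m x) (φ n y))) ∧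
      (∀ j : ℤ, j < 0 → N.grading j = ⊥) ∧
      (∀ (m n : ℕ) (x : ↥(B.grading m)) (y : ↥(N.grading (n : ℤ))),
        ψ (m + n) ⟨(x : B.A) • (y : N.M), by
            have h := N.smul_mem x.2 y.2
            rwa [show ((m : ℤ) + (n : ℤ)) = ((m + n : ℕ) : ℤ) by push_cast; ring] at h⟩ =
          extCast T RM (by ring) (μM (p * k * m) (p * k * n) (φ m x) (ψ n y))) ∧
      B.IsKoszulMod N ∧
      (∃ T' : B.GMod, IsTrivialGMod T' ∧ B.IsKoszulMod T') := by
  have hP := jump_per d p k hp hpd hk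
  have hss := hA.semisimple
  obtain ⟨R', hR'⟩ := hpk
  obtain ⟨R'', hR''⟩ := hMpk
  have gT : ∀ n, (RT.P n).GenInDeg (jump d p n : ℤ) := fun n =>
    (uniq_res hss RT R' (jump d p) (by simpa using hR') n).1
  have gM : ∀ n, (RM.P n).GenInDeg (jump d p n : ℤ) := fun n =>
    (uniq_res hss RM R'' (jump d p) (by simpa using hR'') n).1
  have hX : (cx RT gT).Ex 0 := cx_ex0 RT gT hT.1 hP.zero
  obtain ⟨E⟩ := V0_R0 RT gT hP.zero hT
  refine ⟨Cx.BA (p * k) hP.pos (cx RT gT),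
    fun n => (bCS hP.pos (cx RT gT) n).trans (csExt RT RT gT gT hP hT.1 n),
    Cx.NG (p * k) hP.pos (cx RT gT) (cx RM gM) 0,
    fun n => (nCS hP.pos (cx RT gT) (cx RM gM) n).trans (csExt RT RM gT gM hP hT.1 n),
    ?_, ?_, ?_, Cx.NG_koszul hP hss hX E _ (cx_ex1 RM gM), _, Cx.cxT_trivial hP hX E,
    Cx.NG_koszul hP hss hX E _ Cx.cxT_ex⟩
  · intro m n x y
    exact yoneda RT RT gT gT hT.1 hμA x.2 y.2 _
  · intro j hj
    rw [eq_bot_iff]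
    intro x hx
    rcases Cx.NG_cases hx with h | ⟨n, h, _⟩
    · exact h.2
    · omega
  · intro m n x y
    exact yoneda RT RM gT gM hT.1 hμM x.2 ((Cx.mem_NG (by simp)).1 y.2) _
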